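/- arXiv:2206.01928 — 2 statements merged into one kernel-verified Lean document; each statement's English description precedes it below -/
import Mathlib

section
/- Assume conditions A1–A3 hold. For any p ≥ 2 there exists C_p > 0 such that for all T ≥ 1 and sufficiently small ε > 0, E[ sup_{t∈[0,T]} |Y^ε_t|^p ] ≤ C_p (1 + E|ζ|^p) T ε^{-1}. -/
open MeasureTheory Filter
open scoped ENNReal NNReal Topology RealInnerProductSpace

set_option maxSynthPendingDepth 3

noncomputable section

namespace DiffApprox

/-- Euclidean space `ℝ^k`. -/
abbrev Vec (k : ℕ) : Type := EuclideanSpace ℝ (Fin k)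

/-- `k × l` real matrices, viewed as continuous linear maps `ℝ^l → ℝ^k`. -/
abbrev Mat (k l : ℕ) : Type := Vec l →L[ℝ] Vec k

/-- `μ` belongs to the 2-Wasserstein space `𝒫₂(ℝ^k)`. -/
def memP2 {k : ℕ} (μ : Measure (Vec k)) : Prop :=
  IsProbabilityMeasure μ ∧ (∫⁻ x, (‖x‖₊ : ℝ≥0∞) ^ (2 : ℕ) ∂μ) < ⊤

/-- `π` is a coupling of `μ` and `ν`. -/
def IsCoupling {k : ℕ} (π : Measure (Vec k × Vec k)) (μ ν : Measure (Vec k)) : Prop :=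
  π.map Prod.fst = μ ∧ π.map Prod.snd = ν

/-- The 2-Wasserstein distance. -/
def W2 {k : ℕ} (μ ν : Measure (Vec k)) : ℝ :=
  sInf {c : ℝ | ∃ π : Measure (Vec k × Vec k), IsCoupling π μ ν ∧
    c = Real.sqrt (∫ p, ‖p.1 - p.2‖ ^ (2 : ℕ) ∂π)}

/-- Trace of an endomorphism of `ℝ^k`. -/
def trCLM {k : ℕ} (A : Vec k →L[ℝ] Vec k) : ℝ :=
  LinearMap.trace ℝ (Vec k) A.toLinearMap

/-- Hilbert space adjoint (matrix transpose). -/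
def adj {k l : ℕ} (A : Mat k l) : Mat l k := ContinuousLinearMap.adjoint A

/-- The outer product `(a ⊗ b) v = ⟪b, v⟫ • a`, i.e. `(a ⊗ b)_{ij} = aᵢ bⱼ`. -/
def outer {k : ℕ} (a b : Vec k) : Mat k k := (innerSL ℝ b).smulRight a

/-- Hessian of a scalar function. -/
def hess {k : ℕ} (φ : Vec k → ℝ) (y : Vec k) : Vec k →L[ℝ] Vec k :=
  fderiv ℝ (gradient φ) y

/-- Mixed second derivative `∂²_{xy} φ`. -/
def hessMixed {k l : ℕ} (φ : Vec k → Vec l → ℝ) (x : Vec k) (y : Vec l) :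
    Vec k →L[ℝ] Vec l :=
  fderiv ℝ (fun x' => gradient (φ x') y) x

/-- `C²` test function with compact support. -/
def TestFun {k : ℕ} (φ : Vec k → ℝ) : Prop :=
  ContDiff ℝ 2 φ ∧ HasCompactSupport φ

/-- `C²` test function of two variables with compact support. -/
def TestFun2 {k l : ℕ} (φ : Vec k → Vec l → ℝ) : Prop :=
  ContDiff ℝ 2 (Function.uncurry φ) ∧ HasCompactSupport (Function.uncurry φ)

/-- Generator `L₂(x,μ)` of the frozen equation `dY = f(x,μ,Y)dt + g(x,μ,Y)dW`. -/
def genFrozen {n m d : ℕ} (f : Vec n → Measure (Vec n) → Vec m → Vec m)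
    (g : Vec n → Measure (Vec n) → Vec m → Mat m d) (x : Vec n) (μ : Measure (Vec n))
    (φ : Vec m → ℝ) (y : Vec m) : ℝ :=
  ⟪f x μ y, gradient φ y⟫ +
    (1 / 2) * trCLM (((g x μ y).comp (adj (g x μ y))).comp (hess φ y))

/-- `ν` is an invariant probability measure of the frozen equation. -/
def IsInvariantMeasure {n m d : ℕ} (f : Vec n → Measure (Vec n) → Vec m → Vec m)
    (g : Vec n → Measure (Vec n) → Vec m → Mat m d) (x : Vec n) (μ : Measure (Vec n))
    (ν : Measure (Vec m)) : Prop :=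
  IsProbabilityMeasure ν ∧ ∀ φ : Vec m → ℝ, TestFun φ → ∫ y, genFrozen f g x μ φ y ∂ν = 0

/-- `M` is a martingale on `[0, ∞)` w.r.t. the filtration `ℱ`. -/
def MartOn {Ω : Type} {mΩ : MeasurableSpace Ω} (P : Measure Ω) (ℱ : Filtration ℝ mΩ)
    (M : ℝ → Ω → ℝ) : Prop :=
  (∀ t : ℝ, 0 ≤ t → StronglyMeasurable[ℱ t] (M t) ∧ Integrable (M t) P) ∧
    ∀ s t : ℝ, 0 ≤ s → s ≤ t → P[M t|ℱ s] =ᵐ[P] M s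

/-- The coefficients of the slow–fast McKean–Vlasov system. -/
structure Coeffs (n m d : ℕ) where
  b : Vec n → Measure (Vec n) → Vec m → Vec n
  K : Vec n → Measure (Vec n) → Vec m → Vec n
  σ : Vec n → Measure (Vec n) → Vec m → Mat n d
  f : Vec n → Measure (Vec n) → Vec m → Vec m
  h : Vec n → Measure (Vec n) → Vec m → Vec m
  g : Vec n → Measure (Vec n) → Vec m → Mat m d

/-- Generator of the coupled slow–fast system `(X^ε, Y^ε)` with frozen distribution `μ`. -/
def genSF {n m d : ℕ} (C : Coeffs n m d) (ε : ℝ) (μ : Measure (Vec n))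
    (φ : Vec n → Vec m → ℝ) (x : Vec n) (y : Vec m) : ℝ :=
  ⟪C.b x μ y + (Real.sqrt ε)⁻¹ • C.K x μ y, gradient (fun x' => φ x' y) x⟫ +
    ⟪ε⁻¹ • C.f x μ y + (Real.sqrt ε)⁻¹ • C.h x μ y, gradient (φ x) y⟫ +
    (1 / 2) * trCLM (((C.σ x μ y).comp (adj (C.σ x μ y))).comp (hess (fun x' => φ x' y) x)) +
    (1 / (2 * ε)) * trCLM (((C.g x μ y).comp (adj (C.g x μ y))).comp (hess (φ x) y)) +
    (Real.sqrt ε)⁻¹ * trCLM (((C.σ x μ y).comp (adj (C.g x μ y))).comp (hessMixed φ x y))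

/-- `(X, Y)` is a (weak–martingale problem) solution of the slow–fast McKean–Vlasov
system with scale parameter `ε` and initial data `(ξ, ζ)`. -/
structure IsSFSolution {n m d : ℕ} (C : Coeffs n m d) (ε : ℝ) {Ω : Type}
    [mΩ : MeasurableSpace Ω] (P : Measure Ω) (ℱ : Filtration ℝ mΩ)
    (X : ℝ → Ω → Vec n) (Y : ℝ → Ω → Vec m) (ξ : Ω → Vec n) (ζ : Ω → Vec m) : Prop where
  measX : ∀ t, Measurable (X t)
  measY : ∀ t, Measurable (Y t)
  adaptX : Adapted ℱ X
  adaptY : Adapted ℱ Y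
  initX : ∀ᵐ ω ∂P, X 0 ω = ξ ω
  initY : ∀ᵐ ω ∂P, Y 0 ω = ζ ω
  lawP2X : ∀ t, 0 ≤ t → memP2 (P.map (X t))
  contX : ∀ ω, Continuous fun t => X t ω
  contY : ∀ ω, Continuous fun t => Y t ω
  mart : ∀ φ : Vec n → Vec m → ℝ, TestFun2 φ →
    MartOn P ℱ fun t ω =>
      φ (X t ω) (Y t ω) -
        ∫ s in Set.Ioc (0 : ℝ) t, genSF C ε (P.map (X s)) φ (X s ω) (Y s ω)

/-- Generator of a distribution dependent SDE `dX = Θ(X, ℒ_X) dt + Σ(X, ℒ_X) dW`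
with `A = Σ Σ*`. -/
def genLim {n : ℕ} (Θ : Vec n → Measure (Vec n) → Vec n)
    (A : Vec n → Measure (Vec n) → Mat n n) (μ : Measure (Vec n)) (U : Vec n → ℝ)
    (x : Vec n) : ℝ :=
  ⟪Θ x μ, gradient U x⟫ + (1 / 2) * trCLM ((A x μ).comp (hess U x))

/-- `X` is a (weak) solution of the McKean–Vlasov SDE with drift `Θ`, squared diffusion
`A = Σ Σ*` and initial datum `ξ`. -/
structure IsLimitSolution {n : ℕ} (Θ : Vec n → Measure (Vec n) → Vec n)
    (A : Vec n → Measure (Vec n) → Mat n n) {Ω : Type} [mΩ : MeasurableSpace Ω]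
    (P : Measure Ω) (ℱ : Filtration ℝ mΩ) (X : ℝ → Ω → Vec n) (ξ : Ω → Vec n) : Prop where
  measX : ∀ t, Measurable (X t)
  adaptX : Adapted ℱ X
  initX : ∀ᵐ ω ∂P, X 0 ω = ξ ω
  contX : ∀ ω, Continuous fun t => X t ω
  mart : ∀ U : Vec n → ℝ, TestFun U →
    MartOn P ℱ fun t ω =>
      U (X t ω) - ∫ s in Set.Ioc (0 : ℝ) t, genLim Θ A (P.map (X s)) U (X s ω)

/-- Generator of the synchronous coupling of two copies of the frozen equation,
driven by the same Brownian motion. -/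
def genPair {n m d : ℕ} (f : Vec n → Measure (Vec n) → Vec m → Vec m)
    (g : Vec n → Measure (Vec n) → Vec m → Mat m d) (x1 : Vec n) (μ1 : Measure (Vec n))
    (x2 : Vec n) (μ2 : Measure (Vec n)) (φ : Vec m → Vec m → ℝ) (y1 y2 : Vec m) : ℝ :=
  ⟪f x1 μ1 y1, gradient (fun z => φ z y2) y1⟫ + ⟪f x2 μ2 y2, gradient (φ y1) y2⟫ +
    (1 / 2) * trCLM (((g x1 μ1 y1).comp (adj (g x1 μ1 y1))).comp (hess (fun z => φ z y2) y1)) +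
    (1 / 2) * trCLM (((g x2 μ2 y2).comp (adj (g x2 μ2 y2))).comp (hess (φ y1) y2)) +
    trCLM (((g x1 μ1 y1).comp (adj (g x2 μ2 y2))).comp (hessMixed φ y1 y2))

/-- The uniform probability measure on `[0,1]`, a rich atomless probability space used
to define the Lions derivative by lifting to `L²`. -/
def P01 : Measure ℝ := volume.restrict (Set.Icc (0 : ℝ) 1)

/-- `D` is the Lions derivative of `u : 𝒫₂(ℝ^k) → E` at `μ`: the lift of `u` to
`L²(Ω₀; ℝ^k)` is Fréchet differentiable at every `X` with law `μ` with derivative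
represented by `D ∘ X`. -/
def IsLionsDeriv {k : ℕ} {E : Type*} [NormedAddCommGroup E] [NormedSpace ℝ E]
    [CompleteSpace E] (u : Measure (Vec k) → E) (μ : Measure (Vec k))
    (D : Vec k → (Vec k →L[ℝ] E)) : Prop :=
  ∀ X : Lp (Vec k) 2 P01, P01.map (X : ℝ → Vec k) = μ →
    ∃ L : Lp (Vec k) 2 P01 →L[ℝ] E,
      HasFDerivAt (fun Z : Lp (Vec k) 2 P01 => u (P01.map (Z : ℝ → Vec k))) L X ∧
        ∀ H : Lp (Vec k) 2 P01, L H = ∫ ω, D (X ω) (H ω) ∂P01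

/-- `L²(μ)`-norm of a kernel `D`. -/
def l2n {k : ℕ} {E : Type*} [NormedAddCommGroup E] (μ : Measure (Vec k)) (D : Vec k → E) : ℝ :=
  Real.sqrt (∫ z, ‖D z‖ ^ (2 : ℕ) ∂μ)

/-- `F(·, μ, ·) ∈ C_b^{3,3}` uniformly in `μ`:
three bounded continuous (mixed) derivatives in `(x,y)`. -/
def Cb3 {n m : ℕ} {E : Type*} [NormedAddCommGroup E] [NormedSpace ℝ E]
    (F : Vec n → Measure (Vec n) → Vec m → E) (CB : ℝ) : Prop :=
  ∀ μ : Measure (Vec n), memP2 μ →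
    ContDiff ℝ 3 (fun p : Vec n × Vec m => F p.1 μ p.2) ∧
      ∀ i : ℕ, 1 ≤ i → i ≤ 3 → ∀ p : Vec n × Vec m,
        ‖iteratedFDeriv ℝ i (fun q : Vec n × Vec m => F q.1 μ q.2) p‖ ≤ CB

/-- The Lions-derivative part of condition A3: `F` admits a Lions derivative in the
measure variable, bounded, with bounded and `γ₁`-Hölder (in `y`) derivatives. -/
def A3lions {n m : ℕ} {E : Type*} [NormedAddCommGroup E] [NormedSpace ℝ E] [CompleteSpace E]
    (F : Vec n → Measure (Vec n) → Vec m → E) (CB γ1 : ℝ) : Prop :=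
  ∃ D : Vec n → Measure (Vec n) → Vec m → Vec n → (Vec n →L[ℝ] E),
    (∀ x μ y, memP2 μ → IsLionsDeriv (fun μ' => F x μ' y) μ (D x μ y)) ∧
    (∀ x μ y z, ‖D x μ y z‖ ≤ CB) ∧
    (∀ x μ y z, ‖fderiv ℝ (D x μ y) z‖ ≤ CB) ∧
    (∀ x μ y1 y2 z,
      ‖fderiv ℝ (D x μ y1) z - fderiv ℝ (D x μ y2) z‖ ≤ CB * ‖y1 - y2‖ ^ γ1) ∧
    (∀ x μ z y, ‖fderiv ℝ (fun y' => D x μ y' z) y‖ ≤ CB) ∧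
    (∀ x μ z y1 y2,
      ‖fderiv ℝ (fun y' => D x μ y' z) y1 - fderiv ℝ (fun y' => D x μ y' z) y2‖ ≤
        CB * ‖y1 - y2‖ ^ γ1)

/-- Conditions A1–A3 of the paper for the coefficients of the slow–fast system. -/
structure SA13 {n m d : ℕ} (C : Coeffs n m d) where
  CL : ℝ
  γ : ℝ
  hγ : 0 < γ
  ς : ℝ
  hς : ς ∈ Set.Ioo (0 : ℝ) 1
  CG : ℝ
  CB : ℝ
  γ1 : ℝ
  hγ1 : γ1 ∈ Set.Ioc (0 : ℝ) 1
  lipSlow : ∀ x1 x2 μ1 μ2 y1 y2, memP2 μ1 → memP2 μ2 →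
    ‖C.b x1 μ1 y1 - C.b x2 μ2 y2‖ + ‖C.K x1 μ1 y1 - C.K x2 μ2 y2‖ +
        ‖C.σ x1 μ1 y1 - C.σ x2 μ2 y2‖ ≤
      CL * (‖x1 - x2‖ + ‖y1 - y2‖ + W2 μ1 μ2)
  lipFast : ∀ x1 x2 μ1 μ2 y1 y2, memP2 μ1 → memP2 μ2 →
    ‖C.f x1 μ1 y1 - C.f x2 μ2 y2‖ + ‖C.h x1 μ1 y1 - C.h x2 μ2 y2‖ +
        ‖C.g x1 μ1 y1 - C.g x2 μ2 y2‖ ≤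
      CL * (‖x1 - x2‖ + ‖y1 - y2‖ + W2 μ1 μ2)
  dissip : ∀ x μ y1 y2, memP2 μ →
    2 * ⟪C.f x μ y1 - C.f x μ y2, y1 - y2⟫ + ‖C.g x μ y1 - C.g x μ y2‖ ^ (2 : ℕ) ≤
      -γ * ‖y1 - y2‖ ^ (2 : ℕ)
  growth : ∀ x μ y, memP2 μ →
    ‖C.K x μ y‖ + ‖C.f x μ y‖ + ‖C.h x μ y‖ + ‖C.σ x μ y‖ ≤ CG * (1 + ‖y‖)
  growthg : ∀ x μ y, memP2 μ → ‖C.g x μ y‖ ≤ CG * (1 + ‖y‖ ^ ς)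
  smoothK : Cb3 C.K CB
  smoothf : Cb3 C.f CB
  smoothg : Cb3 C.g CB
  lionsK : A3lions C.K CB γ1
  lionsf : A3lions C.f CB γ1
  lionsg : A3lions C.g CB γ1

/-- Conditions A1–A4 of the paper, together with the invariant measures `ν^{x,μ}` of the
frozen equation and the solution `Φ` of the Poisson equation `-L₂(x,μ)Φ = K`. -/
structure SA {n m d : ℕ} (C : Coeffs n m d) extends SA13 C where
  ν : Vec n → Measure (Vec n) → Measure (Vec m)
  Φ : Vec n → Measure (Vec n) → Vec m → Vec n
  invν : ∀ x μ, memP2 μ → IsInvariantMeasure C.f C.g x μ (ν x μ)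
  uniqν : ∀ x μ, memP2 μ → ∀ ν' : Measure (Vec m), IsInvariantMeasure C.f C.g x μ ν' →
    ν' = ν x μ
  centering : ∀ x μ, memP2 μ → ∫ y, C.K x μ y ∂(ν x μ) = 0
  smoothΦ : ∀ μ, memP2 μ → ContDiff ℝ 3 fun p : Vec n × Vec m => Φ p.1 μ p.2
  poisson : ∀ x μ y (i : Fin n), memP2 μ →
    genFrozen C.f C.g x μ (fun y' => Φ x μ y' i) y = -(C.K x μ y i)

/-- The matrix-valued map `(∂_y Φ) g`. -/
def dyPhiG {n m d : ℕ} (Φ : Vec n → Measure (Vec n) → Vec m → Vec n)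
    (g : Vec n → Measure (Vec n) → Vec m → Mat m d) (x : Vec n) (μ : Measure (Vec n))
    (y : Vec m) : Mat n d :=
  (fderiv ℝ (fun y' => Φ x μ y') y).comp (g x μ y)

/-- Averaged drift `Θ(x,μ) = (b + ∂ₓΦ_K + ∂_yΦ_h + Tr[∂²_{xy}Φ_{σg*}])‾(x,μ)`. -/
def Theta {n m d : ℕ} (C : Coeffs n m d) (ν : Vec n → Measure (Vec n) → Measure (Vec m))
    (Φ : Vec n → Measure (Vec n) → Vec m → Vec n) (x : Vec n) (μ : Measure (Vec n)) :
    Vec n :=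
  ∫ y,
    (C.b x μ y + fderiv ℝ (fun x' => Φ x' μ y) x (C.K x μ y) +
      fderiv ℝ (fun y' => Φ x μ y') y (C.h x μ y) +
      (EuclideanSpace.equiv (Fin n) ℝ).symm fun i =>
        trCLM (((C.σ x μ y).comp (adj (C.g x μ y))).comp
          (fderiv ℝ (fun x' => gradient (fun y' => Φ x' μ y' i) y) x)))
    ∂(ν x μ)

/-- Averaged squared diffusion
`((K⊗Φ) + (K⊗Φ)* + (σg*)∂_yΦ + [(σg*)∂_yΦ]* + σσ*)‾(x,μ)`. -/
def AMat1 {n m d : ℕ} (C : Coeffs n m d) (ν : Vec n → Measure (Vec n) → Measure (Vec m))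
    (Φ : Vec n → Measure (Vec n) → Vec m → Vec n) (x : Vec n) (μ : Measure (Vec n)) :
    Mat n n :=
  ∫ y,
    (outer (C.K x μ y) (Φ x μ y) + adj (outer (C.K x μ y) (Φ x μ y)) +
      ((C.σ x μ y).comp (adj (C.g x μ y))).comp (adj (fderiv ℝ (fun y' => Φ x μ y') y)) +
      adj (((C.σ x μ y).comp (adj (C.g x μ y))).comp
        (adj (fderiv ℝ (fun y' => Φ x μ y') y))) +
      (C.σ x μ y).comp (adj (C.σ x μ y)))
    ∂(ν x μ)

/-- Averaged squared diffusion `((∂_yΦ_g + σ)(∂_yΦ_g + σ)*)‾(x,μ)`. -/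
def AMat2 {n m d : ℕ} (C : Coeffs n m d) (ν : Vec n → Measure (Vec n) → Measure (Vec m))
    (Φ : Vec n → Measure (Vec n) → Vec m → Vec n) (x : Vec n) (μ : Measure (Vec n)) :
    Mat n n :=
  ∫ y, ((dyPhiG Φ C.g x μ y + C.σ x μ y).comp (adj (dyPhiG Φ C.g x μ y + C.σ x μ y)))
    ∂(ν x μ)

/-- `A` is a symmetric positive semi-definite matrix. -/
def IsPSD {k : ℕ} (A : Mat k k) : Prop :=
  adj A = A ∧ ∀ v : Vec k, 0 ≤ ⟪A v, v⟫

instance instPathMeasurableSpace {α E : Type*} [TopologicalSpace α] [TopologicalSpace E] :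
    MeasurableSpace C(α, E) := borel _

/-- The path `t ↦ X t ω` on `[0,T]`, as an element of `C([0,T]; ℝ^k)`
(junk value if the path is not continuous). -/
def pathOf {Ω : Type} {k : ℕ} (X : ℝ → Ω → Vec k) (T : ℝ) (ω : Ω) :
    C(Set.Icc (0 : ℝ) T, Vec k) := by
  classical
  exact if h : Continuous fun t : ℝ => X t ω then
    ⟨fun t => X t.1 ω, h.comp continuous_subtype_val⟩
  else 0

/-- A family of measures is (uniformly) tight. -/
def TightFamily {α : Type*} [TopologicalSpace α] [MeasurableSpace α]
    (S : Set (Measure α)) : Prop :=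
  ∀ δ : ℝ, 0 < δ → ∃ Kc : Set α, IsCompact Kc ∧ ∀ μ ∈ S, μ Kcᶜ ≤ ENNReal.ofReal δ

/-- The frozen equation `dY_t = f(x,μ,Y_t) dt + g(x,μ,Y_t) dW_t` under conditions A1–A2:
`Y x μ y` is its solution starting from `y` (weak/martingale-problem formulation, with the
synchronous coupling of any two copies recorded via `martPair`), and `ν x μ` is its unique
invariant probability measure. -/
structure FrozenSetting (n m d : ℕ) (Ω : Type) [mΩ : MeasurableSpace Ω] (P : Measure Ω)
    (ℱ : Filtration ℝ mΩ) where
  f : Vec n → Measure (Vec n) → Vec m → Vec m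
  g : Vec n → Measure (Vec n) → Vec m → Mat m d
  CL : ℝ
  γ : ℝ
  hγ : 0 < γ
  ς : ℝ
  hς : ς ∈ Set.Ioo (0 : ℝ) 1
  CG : ℝ
  probP : IsProbabilityMeasure P
  lip : ∀ x1 x2 μ1 μ2 y1 y2, memP2 μ1 → memP2 μ2 →
    ‖f x1 μ1 y1 - f x2 μ2 y2‖ + ‖g x1 μ1 y1 - g x2 μ2 y2‖ ≤
      CL * (‖x1 - x2‖ + ‖y1 - y2‖ + W2 μ1 μ2)
  dissip : ∀ x μ y1 y2, memP2 μ →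
    2 * ⟪f x μ y1 - f x μ y2, y1 - y2⟫ + ‖g x μ y1 - g x μ y2‖ ^ (2 : ℕ) ≤
      -γ * ‖y1 - y2‖ ^ (2 : ℕ)
  growthf : ∀ x μ y, memP2 μ → ‖f x μ y‖ ≤ CG * (1 + ‖y‖)
  growthg : ∀ x μ y, memP2 μ → ‖g x μ y‖ ≤ CG * (1 + ‖y‖ ^ ς)
  Y : Vec n → Measure (Vec n) → Vec m → ℝ → Ω → Vec m
  measY : ∀ x μ y t, Measurable (Y x μ y t)
  initY : ∀ x μ y ω, Y x μ y 0 ω = y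
  contY : ∀ x μ y ω, Continuous fun t => Y x μ y t ω
  mart : ∀ x μ y, memP2 μ → ∀ φ : Vec m → ℝ, TestFun φ →
    MartOn P ℱ fun t ω =>
      φ (Y x μ y t ω) - ∫ s in Set.Ioc (0 : ℝ) t, genFrozen f g x μ φ (Y x μ y s ω)
  martPair : ∀ x1 μ1 y1 x2 μ2 y2, memP2 μ1 → memP2 μ2 → ∀ φ : Vec m → Vec m → ℝ,
    TestFun2 φ →
    MartOn P ℱ fun t ω =>
      φ (Y x1 μ1 y1 t ω) (Y x2 μ2 y2 t ω) -
        ∫ s in Set.Ioc (0 : ℝ) t,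
          genPair f g x1 μ1 x2 μ2 φ (Y x1 μ1 y1 s ω) (Y x2 μ2 y2 s ω)
  ν : Vec n → Measure (Vec n) → Measure (Vec m)
  invν : ∀ x μ, memP2 μ → IsInvariantMeasure f g x μ (ν x μ)
  uniqν : ∀ x μ, memP2 μ → ∀ ν' : Measure (Vec m), IsInvariantMeasure f g x μ ν' →
    ν' = ν x μ

/-- `Φ(x,μ,y) = ∫_0^∞ E[K(x, μ, Y_t^{x,μ,y})] dt`, the solution of the Poisson equation. -/
def PoissonPhi {n m d : ℕ} {Ω : Type} [mΩ : MeasurableSpace Ω] {P : Measure Ω}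
    {ℱ : Filtration ℝ mΩ} (FS : FrozenSetting n m d Ω P ℱ)
    (K : Vec n → Measure (Vec n) → Vec m → Vec n) (x : Vec n) (μ : Measure (Vec n))
    (y : Vec m) : Vec n :=
  ∫ t in Set.Ioi (0 : ℝ), (∫ ω, K x μ (FS.Y x μ y t ω) ∂P)

/-- Conditions A1–A4 for the coefficient `K` (relative to a frozen fast dynamics):
Lipschitz continuity, linear growth, the regularity condition A3 for `K, f, g`,
and the centering condition A4. -/
structure KAssumptions {n m d : ℕ} {Ω : Type} [mΩ : MeasurableSpace Ω] {P : Measure Ω}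
    {ℱ : Filtration ℝ mΩ} (FS : FrozenSetting n m d Ω P ℱ)
    (K : Vec n → Measure (Vec n) → Vec m → Vec n) where
  CK : ℝ
  CB : ℝ
  γ1 : ℝ
  hγ1 : γ1 ∈ Set.Ioc (0 : ℝ) 1
  lip : ∀ x1 x2 μ1 μ2 y1 y2, memP2 μ1 → memP2 μ2 →
    ‖K x1 μ1 y1 - K x2 μ2 y2‖ ≤ CK * (‖x1 - x2‖ + ‖y1 - y2‖ + W2 μ1 μ2)
  growth : ∀ x μ y, memP2 μ → ‖K x μ y‖ ≤ CK * (1 + ‖y‖)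
  smoothK : Cb3 K CB
  lionsK : A3lions K CB γ1
  smoothf : Cb3 FS.f CB
  lionsf : A3lions FS.f CB γ1
  smoothg : Cb3 FS.g CB
  lionsg : A3lions FS.g CB γ1
  centering : ∀ x μ, memP2 μ → ∫ y, K x μ y ∂(FS.ν x μ) = 0

end DiffApprox
namespace DiffApprox

/-- Lyapunov function. -/
def VV {m : ℕ} (k : ℕ) (y : Vec m) : ℝ := (1 + ‖y‖ ^ 2) ^ (k + 2)

lemma hasGrad_VV {m : ℕ} (k : ℕ) (y : Vec m) :
    HasGradientAt (VV k) ((2 * (k + 2) * (1 + ‖y‖ ^ 2) ^ (k + 1) : ℝ) • y) y := by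
  rw [hasGradientAt_iff_hasFDerivAt]
  have h1 : HasFDerivAt (fun y : Vec m => 1 + ‖y‖ ^ 2) (2 • (innerSL ℝ y)) y := by
    have := (hasStrictFDerivAt_norm_sq y).hasFDerivAt
    exact this.const_add 1
  have h2 := h1.pow (k + 2)
  refine h2.congr_fderiv ?_
  ext v
  simp
  ring

lemma grad_VV {m : ℕ} (k : ℕ) :
    gradient (VV k : Vec m → ℝ) =
      fun y => (2 * (k + 2) * (1 + ‖y‖ ^ 2) ^ (k + 1) : ℝ) • y := by
  funext y
  exact (hasGrad_VV k y).gradient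

lemma contDiff_VV {m : ℕ} (k : ℕ) : ContDiff ℝ 2 (VV k : Vec m → ℝ) := by
  unfold VV
  exact (contDiff_const.add (contDiff_norm_sq ℝ)).pow _

lemma hess_VV_norm {m : ℕ} (k : ℕ) (y : Vec m) :
    ‖hess (VV k) y‖ ≤ (2 * (k + 2) + 4 * (k + 2) * (k + 1)) * (1 + ‖y‖ ^ 2) ^ (k + 1) := by
  unfold hess
  rw [grad_VV]
  have h1 : HasFDerivAt (fun y : Vec m => 1 + ‖y‖ ^ 2) (2 • (innerSL ℝ y)) y := by
    have := (hasStrictFDerivAt_norm_sq y).hasFDerivAt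
    exact this.const_add 1
  have h2 := ((h1.pow (k + 1)).const_mul (2 * (k + 2) : ℝ)).smul (hasFDerivAt_id y)
  have h3 := h2.fderiv
  simp only [id] at h3
  erw [h3]
  refine ContinuousLinearMap.opNorm_le_bound _ (by positivity) fun v => ?_
  have hy : ‖y‖ ^ 2 ≤ 1 + ‖y‖ ^ 2 := by linarith
  have hi : |⟪y, v⟫| ≤ ‖y‖ * ‖v‖ := abs_real_inner_le_norm y v
  simp only [add_apply, smul_apply,
    ContinuousLinearMap.smulRight_apply, ContinuousLinearMap.id_apply]
  refine (norm_add_le _ _).trans ?_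
  rw [norm_smul, norm_smul]
  simp only [Real.norm_eq_abs, smul_eq_mul, nsmul_eq_mul, abs_mul, innerSL_apply_apply]
  rw [abs_of_nonneg (show (0:ℝ) ≤ (1 + ‖y‖ ^ 2) ^ (k + 1) by positivity)]
  simp
  rw [abs_of_nonneg (show (0:ℝ) ≤ (k:ℝ) + 2 by positivity),
    abs_of_nonneg (show (0:ℝ) ≤ (k:ℝ) + 1 by positivity),
    abs_of_nonneg (show (0:ℝ) ≤ 1 + ‖y‖ ^ 2 by positivity)]
  calc _ ≤ 2 * ((k:ℝ) + 2) * (1 + ‖y‖ ^ 2) ^ (k + 1) * ‖v‖ +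
        2 * ((k:ℝ) + 2) * (((k:ℝ) + 1) * (1 + ‖y‖ ^ 2) ^ k * (2 * (‖y‖ * ‖v‖))) * ‖y‖ := by
        gcongr
    _ = 2 * ((k:ℝ) + 2) * (1 + ‖y‖ ^ 2) ^ (k + 1) * ‖v‖ +
        4 * ((k:ℝ) + 2) * ((k:ℝ) + 1) * (‖y‖ ^ 2 * (1 + ‖y‖ ^ 2) ^ k) * ‖v‖ := by ring
    _ ≤ 2 * ((k:ℝ) + 2) * (1 + ‖y‖ ^ 2) ^ (k + 1) * ‖v‖ +
        4 * ((k:ℝ) + 2) * ((k:ℝ) + 1) * ((1 + ‖y‖ ^ 2) * (1 + ‖y‖ ^ 2) ^ k) * ‖v‖ := by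
        gcongr
    _ = _ := by ring

lemma trCLM_le {m : ℕ} (A : Vec m →L[ℝ] Vec m) : trCLM A ≤ m * ‖A‖ := by
  unfold trCLM
  rw [LinearMap.trace_eq_sum_inner _ (EuclideanSpace.basisFun (Fin m) ℝ)]
  calc _ ≤ ∑ i : Fin m, ‖A‖ := by
        refine Finset.sum_le_sum fun i _ => ?_
        refine (real_inner_le_norm _ _).trans ?_
        have h1 : ‖(EuclideanSpace.basisFun (Fin m) ℝ) i‖ = 1 :=
          (EuclideanSpace.basisFun (Fin m) ℝ).orthonormal.1 i
        rw [h1, one_mul]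
        have := A.le_opNorm ((EuclideanSpace.basisFun (Fin m) ℝ) i)
        rw [h1, mul_one] at this
        exact this
    _ = _ := by simp

lemma genSF_local {n m d : ℕ} (C : Coeffs n m d) (ε : ℝ) (μ : Measure (Vec n))
    (φ : Vec n → Vec m → ℝ) (ψ : Vec m → ℝ) (x : Vec n) (y : Vec m) (U : Set (Vec n))
    (W : Set (Vec m)) (hU : IsOpen U) (hW : IsOpen W) (hx : x ∈ U) (hy : y ∈ W)
    (h : ∀ x ∈ U, ∀ y ∈ W, φ x y = ψ y) :
    genSF C ε μ φ x y = ⟪ε⁻¹ • C.f x μ y + (Real.sqrt ε)⁻¹ • C.h x μ y, gradient ψ y⟫ +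
    (1 / (2 * ε)) * trCLM (((C.g x μ y).comp (adj (C.g x μ y))).comp (hess ψ y)) := by
  have hUn := hU.mem_nhds hx
  have hWn := hW.mem_nhds hy
  have e1 : ∀ x ∈ U, ∀ y ∈ W, gradient (φ x) y = gradient ψ y := by
    intro x hx y hy
    unfold gradient
    congr 1
    apply Filter.EventuallyEq.fderiv_eq
    filter_upwards [hW.mem_nhds hy] with z hz using h x hx z hz
  have e2 : ∀ x ∈ U, ∀ y ∈ W, gradient (fun x' => φ x' y) x = 0 := by
    intro x hx y hy
    unfold gradient
    have : fderiv ℝ (fun x' => φ x' y) x = fderiv ℝ (fun _ => ψ y) x := by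
      apply Filter.EventuallyEq.fderiv_eq
      filter_upwards [hU.mem_nhds hx] with z hz using h z hz y hy
    rw [this]; simp
  have e3 : hess (φ x) y = hess ψ y := by
    unfold hess
    apply Filter.EventuallyEq.fderiv_eq
    filter_upwards [hWn] with z hz using e1 x hx z hz
  have e4 : hess (fun x' => φ x' y) x = 0 := by
    unfold hess
    have : fderiv ℝ (gradient (fun x' => φ x' y)) x = fderiv ℝ (fun _ => (0 : Vec n)) x := by
      apply Filter.EventuallyEq.fderiv_eq
      filter_upwards [hUn] with z hz using e2 z hz y hy
    rw [this]; simp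
  have e5 : hessMixed φ x y = 0 := by
    unfold hessMixed
    have : fderiv ℝ (fun x' => gradient (φ x') y) x = fderiv ℝ (fun _ => gradient ψ y) x := by
      apply Filter.EventuallyEq.fderiv_eq
      filter_upwards [hUn] with z hz using e1 z hz y hy
    rw [this]; simp
  unfold genSF
  rw [e3, e4, e5, e1 x hx y hy, e2 x hx y hy]
  simp [trCLM]

lemma scalar_bound (k : ℕ) (a b e ς : ℝ) (ha : 0 < a) (hς : ς ∈ Set.Ioo (0 : ℝ) 1) :
    ∃ C0 : ℝ, 0 ≤ C0 ∧ ∀ s : ℝ, 0 ≤ s →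
      (1 + s ^ 2) ^ (k + 1) * (-a * s ^ 2 + b * s + e * (1 + s ^ ς) ^ 2) ≤ C0 := by
  have hlim : Tendsto (fun s : ℝ => b * s⁻¹ + e * (s⁻¹ + s ^ (-(1 - ς))) ^ 2) atTop (𝓝 0) := by
    have h1 : Tendsto (fun s : ℝ => s⁻¹) atTop (𝓝 0) := tendsto_inv_atTop_zero
    have h2 : Tendsto (fun s : ℝ => s ^ (-(1 - ς))) atTop (𝓝 0) :=
      tendsto_rpow_neg_atTop (by linarith [hς.2])
    have := (h1.const_mul b).add (((h1.add h2).pow 2).const_mul e)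
    simpa using this
  have hev := (hlim.eventually (gt_mem_nhds ha)).and (eventually_gt_atTop (0 : ℝ))
  obtain ⟨s0, hs0⟩ := eventually_atTop.1 hev
  have hcont : Continuous fun s : ℝ =>
      (1 + s ^ 2) ^ (k + 1) * (-a * s ^ 2 + b * s + e * (1 + s ^ ς) ^ 2) := by
    have : Continuous fun s : ℝ => s ^ ς := Real.continuous_rpow_const hς.1.le
    fun_prop
  obtain ⟨B, hB⟩ := (isCompact_Icc (a := (0 : ℝ)) (b := s0)).bddAbove_image hcont.continuousOn
  refine ⟨max B 0, le_max_right _ _, fun s hs => ?_⟩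
  rcases le_total s s0 with h | h
  · exact (hB ⟨s, ⟨hs, h⟩, rfl⟩).trans (le_max_left _ _)
  · obtain ⟨h1, h2⟩ := hs0 s h
    refine le_trans ?_ (le_max_right _ _)
    refine mul_nonpos_of_nonneg_of_nonpos (by positivity) ?_
    have h3 : s ^ ς = s * s ^ (-(1 - ς)) := by
      nth_rewrite 2 [← Real.rpow_one s]
      rw [← Real.rpow_add h2]; congr 1; ring
    have h4 : -a * s ^ 2 + b * s + e * (1 + s ^ ς) ^ 2 =
        s ^ 2 * (-a + (b * s⁻¹ + e * (s⁻¹ + s ^ (-(1 - ς))) ^ 2)) := by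
      rw [h3]; field_simp; ring
    rw [h4]
    exact mul_nonpos_of_nonneg_of_nonpos (by positivity) (by linarith)

lemma gen_bound {n m d : ℕ} (C : Coeffs n m d) (SAh : SA13 C) (k : ℕ) :
    ∃ C0 : ℝ, 0 ≤ C0 ∧ ∃ ε₀ ∈ Set.Ioc (0 : ℝ) 1, ∀ ε ∈ Set.Ioo (0 : ℝ) ε₀,
      ∀ x μ y, memP2 μ →
      ⟪ε⁻¹ • C.f x μ y + (Real.sqrt ε)⁻¹ • C.h x μ y, gradient (VV k) y⟫ +
      (1 / (2 * ε)) * trCLM (((C.g x μ y).comp (adj (C.g x μ y))).comp (hess (VV k) y))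
        ≤ C0 / ε := by
  set G : ℝ := |SAh.CG| + 1 with hG
  have hGpos : 0 < G := by positivity
  have hGle : SAh.CG ≤ G := by have := le_abs_self SAh.CG; linarith
  have hγ := SAh.hγ
  set c : ℝ := 2 * (k + 2) with hc
  have hcpos : 0 < c := by positivity
  set cH : ℝ := 2 * (k + 2) + 4 * (k + 2) * (k + 1) with hcH
  have hcHpos : 0 < cH := by positivity
  obtain ⟨C0, hC0, hs⟩ := scalar_bound k (c * (SAh.γ / 4)) (c * (G + SAh.γ / 4))
    (m * cH / 2 * G ^ 2) SAh.ς (by positivity) SAh.hς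
  refine ⟨C0, hC0, min 1 ((SAh.γ / (4 * G)) ^ 2), ⟨by positivity, min_le_left _ _⟩, ?_⟩
  intro ε hε x μ y hμ
  have hε0 := hε.1
  have hsq : Real.sqrt ε * G ≤ SAh.γ / 4 := by
    have h1 : Real.sqrt ε ≤ SAh.γ / (4 * G) := by
      rw [Real.sqrt_le_left (by positivity)]
      exact (hε.2.trans_le (min_le_right _ _)).le
    calc _ ≤ SAh.γ / (4 * G) * G := by gcongr
      _ = _ := by field_simp
  have hsi : (Real.sqrt ε)⁻¹ = ε⁻¹ * Real.sqrt ε := by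
    have h0 : Real.sqrt ε ≠ 0 := (Real.sqrt_pos.2 hε0).ne'
    have h2 := Real.mul_self_sqrt hε0.le
    field_simp
    nlinarith
  have hW : 0 ≤ (1 + ‖y‖ ^ 2) ^ (k + 1) := by positivity
  have hgr := SAh.growth x μ y hμ
  have hgr0 := SAh.growth x μ 0 hμ
  have hf0 : ‖C.f x μ 0‖ ≤ G := by
    have h1 := norm_nonneg (C.K x μ 0)
    have h2 := norm_nonneg (C.h x μ 0)
    have h3 := norm_nonneg (C.σ x μ 0)
    simp only [norm_zero, add_zero, mul_one] at hgr0
    linarith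
  have hh : ‖C.h x μ y‖ ≤ G * (1 + ‖y‖) := by
    have h1 := norm_nonneg (C.K x μ y)
    have h2 := norm_nonneg (C.f x μ y)
    have h3 := norm_nonneg (C.σ x μ y)
    have : SAh.CG * (1 + ‖y‖) ≤ G * (1 + ‖y‖) := by gcongr
    linarith
  have hg : ‖C.g x μ y‖ ≤ G * (1 + ‖y‖ ^ SAh.ς) := by
    refine (SAh.growthg x μ y hμ).trans ?_
    have : 0 ≤ ‖y‖ ^ SAh.ς := by positivity
    gcongr
  have hfy : ⟪C.f x μ y, y⟫ ≤ -(SAh.γ / 2) * ‖y‖ ^ 2 + G * ‖y‖ := by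
    have h1 := SAh.dissip x μ y 0 hμ
    rw [sub_zero, inner_sub_left] at h1
    have h2 : ⟪C.f x μ 0, y⟫ ≤ G * ‖y‖ := (real_inner_le_norm _ _).trans (by gcongr)
    have h3 := sq_nonneg ‖C.g x μ y - C.g x μ 0‖
    nlinarith
  have hhy : ⟪C.h x μ y, y⟫ ≤ G * (1 + ‖y‖) * ‖y‖ := (real_inner_le_norm _ _).trans (by gcongr)
  have hhy' : Real.sqrt ε * ⟪C.h x μ y, y⟫ ≤ SAh.γ / 4 * ((1 + ‖y‖) * ‖y‖) := by
    calc _ ≤ Real.sqrt ε * (G * (1 + ‖y‖) * ‖y‖) := by gcongr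
      _ = (Real.sqrt ε * G) * ((1 + ‖y‖) * ‖y‖) := by ring
      _ ≤ _ := by gcongr
  have htr : trCLM (((C.g x μ y).comp (adj (C.g x μ y))).comp (hess (VV k) y)) ≤
      m * ((G * (1 + ‖y‖ ^ SAh.ς)) ^ 2 * (cH * (1 + ‖y‖ ^ 2) ^ (k + 1))) := by
    refine (trCLM_le _).trans ?_
    have hadj : ‖adj (C.g x μ y)‖ = ‖C.g x μ y‖ := by
      unfold adj
      exact LinearIsometryEquiv.norm_map _ _
    have h1 : ‖((C.g x μ y).comp (adj (C.g x μ y))).comp (hess (VV k) y)‖ ≤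
        ‖C.g x μ y‖ ^ 2 * ‖hess (VV k) y‖ := by
      refine (ContinuousLinearMap.opNorm_comp_le _ _).trans ?_
      gcongr
      refine (ContinuousLinearMap.opNorm_comp_le _ _).trans ?_
      rw [hadj, sq]
    have h2 := hess_VV_norm k y
    gcongr
    refine h1.trans ?_
    gcongr
  rw [grad_VV]
  simp only
  rw [real_inner_smul_right, inner_add_left, real_inner_smul_left, real_inner_smul_left, hsi]
  have hfin := hs ‖y‖ (norm_nonneg _)
  have hεi : 0 < ε⁻¹ := by positivity
  calc _ ≤ ε⁻¹ * ((1 + ‖y‖ ^ 2) ^ (k + 1) * (c * ((-(SAh.γ / 2) * ‖y‖ ^ 2 + G * ‖y‖) +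
        SAh.γ / 4 * ((1 + ‖y‖) * ‖y‖)))) +
        (1 / (2 * ε)) * (m * ((G * (1 + ‖y‖ ^ SAh.ς)) ^ 2 * (cH * (1 + ‖y‖ ^ 2) ^ (k + 1)))) := by
        refine add_le_add ?_ (mul_le_mul_of_nonneg_left htr (by positivity))
        calc _ = ε⁻¹ * ((1 + ‖y‖ ^ 2) ^ (k + 1) * (c * (⟪C.f x μ y, y⟫ +
            Real.sqrt ε * ⟪C.h x μ y, y⟫))) := by rw [hc]; ring
          _ ≤ _ := by gcongr
    _ = ε⁻¹ * ((1 + ‖y‖ ^ 2) ^ (k + 1) * (-(c * (SAh.γ / 4)) * ‖y‖ ^ 2 +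
        c * (G + SAh.γ / 4) * ‖y‖ + m * cH / 2 * G ^ 2 * (1 + ‖y‖ ^ SAh.ς) ^ 2)) := by
        field_simp
        ring
    _ ≤ ε⁻¹ * C0 := by gcongr
    _ = _ := by field_simp

lemma mart_setIntegral {Ω : Type} {mΩ : MeasurableSpace Ω} {P : Measure Ω}
    [IsProbabilityMeasure P] {ℱ : Filtration ℝ mΩ} {M : ℝ → Ω → ℝ} (hM : MartOn P ℱ M)
    {s t : ℝ} (hs : 0 ≤ s) (hst : s ≤ t) {A : Set Ω} (hA : MeasurableSet[ℱ s] A) :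
    ∫ ω in A, M t ω ∂P = ∫ ω in A, M s ω ∂P := by
  have h1 := setIntegral_condExp (ℱ.le s) (hM.1 t (hs.trans hst)).2 hA
  rw [← h1]
  exact setIntegral_congr_ae (ℱ.le s A hA) ((hM.2 s t hs hst).mono fun ω h _ => h)

lemma forall_clamp {u : ℝ → ℝ} (hu : Continuous u) {t c : ℝ} (ht : 0 ≤ t) :
    (∀ s ∈ Set.Icc 0 t, u s ≤ c) ↔ ∀ q : ℚ, u (max 0 (min (q : ℝ) t)) ≤ c := by
  constructor
  · intro h q
    exact h _ ⟨le_max_left _ _, max_le ht (min_le_right _ _)⟩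
  · intro h s hs
    have key : ∀ q : ℝ, u (max 0 (min q t)) ≤ c := by
      intro q
      refine Rat.denseRange_cast.induction_on (p := fun q : ℝ => u (max 0 (min q t)) ≤ c) q ?_ h
      exact isClosed_le (by fun_prop) continuous_const
    have := key s
    rwa [min_eq_left hs.2, max_eq_right hs.1] at this

/-- grid points -/
def gp (T : ℝ) (N k : ℕ) : ℝ := k * (T / (N + 1))

lemma gp_nonneg {T : ℝ} (hT : 0 ≤ T) (N k : ℕ) : 0 ≤ gp T N k := by
  unfold gp; positivity

lemma gp_le {T : ℝ} (hT : 0 ≤ T) {N k : ℕ} (hk : k ≤ N + 1) : gp T N k ≤ T := by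
  unfold gp
  have : (k : ℝ) ≤ N + 1 := by exact_mod_cast hk
  calc (k : ℝ) * (T / (N + 1)) ≤ (N + 1) * (T / (N + 1)) := by gcongr
    _ = T := by field_simp

lemma gp_mono {T : ℝ} (hT : 0 ≤ T) (N : ℕ) : Monotone (gp T N) := by
  intro a b h
  unfold gp
  gcongr

lemma gp_approx {T : ℝ} (hT : 0 < T) (N : ℕ) {s : ℝ} (hs : 0 ≤ s) :
    ∃ j : ℕ, gp T N j ≤ s ∧ s < gp T N j + T / (N + 1) := by
  have hd : 0 < T / (N + 1) := by positivity
  refine ⟨⌊s / (T / (N + 1))⌋₊, ?_, ?_⟩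
  · unfold gp
    have := Nat.floor_le (show 0 ≤ s / (T / (N + 1)) by positivity)
    rwa [le_div_iff₀ hd] at this
  · unfold gp
    have := Nat.lt_floor_add_one (s / (T / (N + 1)))
    rw [div_lt_iff₀ hd] at this
    linarith

/-- stopped pieces -/
def BB {Ω : Type} (w : ℝ → Ω → ℝ) (T : ℝ) (N k : ℕ) : Set Ω :=
  {ω | w 0 ω < 0 ∧ (0 ≤ w (gp T N k) ω ∨ N + 1 ≤ k) ∧
    (∀ j < k, w (gp T N j) ω < 0 ∧ j < N + 1) ∧ ∀ s ∈ Set.Icc 0 (gp T N k), w s ω ≤ 1}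

lemma BB_meas {Ω : Type} {mΩ : MeasurableSpace Ω} {ℱ : Filtration ℝ mΩ} {w : ℝ → Ω → ℝ}
    (hw : ∀ t, Measurable[ℱ t] (w t)) (hc : ∀ ω, Continuous fun t => w t ω) {T : ℝ} (hT : 0 < T)
    (N k : ℕ) : MeasurableSet[ℱ (gp T N k)] (BB w T N k) := by
  have hle : ∀ s ≤ gp T N k, Measurable[ℱ (gp T N k)] (w s) :=
    fun s hs => (hw s).mono (ℱ.mono hs) le_rfl
  have h0 := gp_nonneg hT.le N k
  have e : BB w T N k = {ω | w 0 ω < 0} ∩ ({ω | 0 ≤ w (gp T N k) ω} ∪ {_ω | N + 1 ≤ k}) ∩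
      (⋂ j : ℕ, ⋂ (_ : j < k), ({ω | w (gp T N j) ω < 0} ∩ {_ω | j < N + 1})) ∩
      ⋂ q : ℚ, {ω | w (max 0 (min (q : ℝ) (gp T N k))) ω ≤ 1} := by
    ext ω
    unfold BB
    rw [Set.mem_ofPred_eq, forall_clamp (hc ω) h0]
    simp only [Set.mem_inter_iff, Set.mem_iInter, Set.mem_union, Set.mem_ofPred_eq]
    tauto
  rw [e]
  refine MeasurableSet.inter (MeasurableSet.inter (MeasurableSet.inter ?_ (MeasurableSet.union ?_ ?_)) ?_) ?_
  · exact hle 0 h0 measurableSet_Iio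
  · exact hle _ le_rfl measurableSet_Ici
  · exact MeasurableSet.const _
  · refine MeasurableSet.iInter fun j => MeasurableSet.iInter fun hj => MeasurableSet.inter ?_ ?_
    · exact hle _ (gp_mono hT.le N hj.le) measurableSet_Iio
    · exact MeasurableSet.const _
  · refine MeasurableSet.iInter fun q => ?_
    exact hle _ (max_le h0 (min_le_right _ _)) measurableSet_Iic

lemma BB_disj {Ω : Type} (w : ℝ → Ω → ℝ) (T : ℝ) (N : ℕ) {i j : ℕ} (h : i ≠ j) :
    Disjoint (BB w T N i) (BB w T N j) := by
  rw [Set.disjoint_left]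
  rintro ω ⟨-, h1, h2, -⟩ ⟨-, h3, h4, -⟩
  rcases lt_or_gt_of_ne h with h | h
  · have := h4 i h
    rcases h1 with h1 | h1
    · linarith [this.1]
    · omega
  · have := h2 j h
    rcases h3 with h1 | h1
    · linarith [this.1]
    · omega

lemma BB_eventually {Ω : Type} {w : ℝ → Ω → ℝ} (hc : ∀ ω, Continuous fun t => w t ω)
    {T : ℝ} (hT : 0 < T) (ω : Ω) (h0 : w 0 ω < 0) :
    ∀ᶠ N : ℕ in atTop, ∃ k ∈ Finset.range (N + 2), ω ∈ BB w T N k := by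
  have huc := (isCompact_Icc (a := (0 : ℝ)) (b := T)).uniformContinuousOn_of_continuous
    (hc ω).continuousOn
  obtain ⟨δ, hδ, hu⟩ := Metric.uniformContinuousOn_iff.1 huc 1 one_pos
  have hlim : Tendsto (fun N : ℕ => T / ((N : ℝ) + 1)) atTop (𝓝 0) :=
    tendsto_const_div_atTop_nhds_zero_nat T |>.comp (tendsto_add_atTop_nat 1) |>.congr
      fun N => by simp
  filter_upwards [hlim.eventually (gt_mem_nhds hδ)] with N hN
  classical
  have hex : ∃ k, 0 ≤ w (gp T N k) ω ∨ N + 1 ≤ k := ⟨N + 1, Or.inr le_rfl⟩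
  have hk := Nat.find_spec hex
  have hmin : ∀ j < Nat.find hex, w (gp T N j) ω < 0 ∧ j < N + 1 := by
    intro j hj
    have := Nat.find_min hex hj
    push Not at this
    exact this
  have hkle : Nat.find hex ≤ N + 1 := Nat.find_min' hex (Or.inr le_rfl)
  generalize Nat.find hex = k at hk hmin hkle
  have hk0 : k ≠ 0 := by
    rintro rfl
    rcases hk with h | h
    · simp only [gp, Nat.cast_zero, zero_mul] at h
      linarith
    · omega
  refine ⟨k, Finset.mem_range.2 (by omega), h0, hk, hmin, ?_⟩
  intro s hs
  have hsT : s ≤ T := hs.2.trans (gp_le hT.le hkle)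
  have hd : 0 < T / ((N : ℝ) + 1) := by positivity
  have : ∃ j < k, gp T N j ≤ s ∧ s ≤ gp T N j + T / (N + 1) := by
    obtain ⟨j, hj1, hj2⟩ := gp_approx hT N hs.1
    by_cases hjk : j < k
    · exact ⟨j, hjk, hj1, hj2.le⟩
    · refine ⟨k - 1, by omega, ?_, ?_⟩
      · exact (gp_mono hT.le N (by omega)).trans hj1
      · refine hs.2.trans (le_of_eq ?_)
        unfold gp
        rw [Nat.cast_sub (by omega)]
        push_cast
        ring
  obtain ⟨j, hjk, h1, h2⟩ := this
  have h3 := hu s ⟨hs.1, hsT⟩ (gp T N j) ⟨gp_nonneg hT.le N j, h1.trans hsT⟩ (by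
    rw [Real.dist_eq, abs_lt]; constructor <;> linarith)
  rw [Real.dist_eq, abs_lt] at h3
  have := (hmin j hjk).1
  linarith [h3.2]

lemma hit_eventually {u : ℝ → ℝ} (hc : Continuous u)
    {T : ℝ} (hT : 0 < T) {t : ℝ} (ht : t ∈ Set.Icc 0 T) (h0 : 0 < u t) :
    ∀ᶠ N : ℕ in atTop, ∃ j ∈ Finset.range (N + 2), 0 ≤ u (gp T N j) := by
  obtain ⟨δ, hδ, hu⟩ := Metric.continuous_iff.1 hc t (u t) h0
  have hlim : Tendsto (fun N : ℕ => T / ((N : ℝ) + 1)) atTop (𝓝 0) :=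
    tendsto_const_div_atTop_nhds_zero_nat T |>.comp (tendsto_add_atTop_nat 1) |>.congr
      fun N => by simp
  filter_upwards [hlim.eventually (gt_mem_nhds hδ)] with N hN
  obtain ⟨j, hj1, hj2⟩ := gp_approx hT N ht.1
  have hd : 0 < T / ((N : ℝ) + 1) := by positivity
  refine ⟨j, ?_, ?_⟩
  · have h1 : gp T N j ≤ gp T N (N + 1) := by
      refine (hj1.trans ht.2).trans (le_of_eq ?_)
      unfold gp; push_cast; field_simp
    unfold gp at h1
    have h2 : (j : ℝ) ≤ ((N + 1 : ℕ) : ℝ) := le_of_mul_le_mul_right h1 hd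
    have h3 : j ≤ N + 1 := by exact_mod_cast h2
    rw [Finset.mem_range]; omega
  · have := hu (gp T N j) (by rw [Real.dist_eq, abs_lt]; constructor <;> linarith)
    rw [Real.dist_eq, abs_lt] at this
    linarith [this.1]

lemma max_ineq {Ω : Type} {mΩ : MeasurableSpace Ω} {P : Measure Ω}
    [IsProbabilityMeasure P] {ℱ : Filtration ℝ mΩ} {M w : ℝ → Ω → ℝ} (hM : MartOn P ℱ M)
    (hw : ∀ t, Measurable[ℱ t] (w t)) (hc : ∀ ω, Continuous fun t => w t ω) {T : ℝ} (hT : 0 < T)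
    {a l : ℝ} (E : Set Ω) (hE : MeasurableSet E)
    (hE0 : ∀ ω ∈ E, w 0 ω < 0) (hE1 : ∀ ω ∈ E, ∃ t ∈ Set.Icc 0 T, 0 < w t ω)
    (hlow : ∀ t ∈ Set.Icc 0 T, ∀ ω, (∀ s ∈ Set.Icc 0 t, w s ω ≤ 1) → 0 ≤ M t ω + a)
    (hlow' : ∀ t ∈ Set.Icc 0 T, ∀ ω ∈ E, (∀ s ∈ Set.Icc 0 t, w s ω ≤ 1) → 0 ≤ w t ω →
      l ≤ M t ω + a) :
    l * P.real E ≤ ∫ ω in {ω | w 0 ω < 0}, (M 0 ω + a) ∂P := by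
  classical
  set A0 : Set Ω := {ω | w 0 ω < 0} with hA0
  have hA0m : MeasurableSet[ℱ 0] A0 := hw 0 measurableSet_Iio
  have hA0m' : MeasurableSet A0 := ℱ.le 0 _ hA0m
  set S : ℕ → Set Ω := fun N => ⋃ k ∈ Finset.range (N + 2), BB w T N k with hS
  set EN : ℕ → Set Ω := fun N => E ∩ ⋃ j ∈ Finset.range (N + 2), {ω | 0 ≤ w (gp T N j) ω} with hEN
  have hBm : ∀ N k, MeasurableSet (BB w T N k) := fun N k => ℱ.le _ _ (BB_meas hw hc hT N k)
  have hSm : ∀ N, MeasurableSet (S N) := fun N =>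
    Finset.measurableSet_biUnion _ fun k _ => hBm N k
  have hENm : ∀ N, MeasurableSet (EN N) := fun N => hE.inter
    (Finset.measurableSet_biUnion _ fun j _ => ((hw _).mono (ℱ.le _) le_rfl) measurableSet_Ici)
  have hinteg : ∀ t, 0 ≤ t → Integrable (fun ω => M t ω + a) P := fun t ht =>
    (hM.1 t ht).2.add (integrable_const a)
  have hl : ∀ s : Set Ω, MeasurableSet s → Integrable (s.indicator fun _ => l) P :=
    fun s hs => (integrable_const l).indicator hs
  -- the discrete inequality
  have key : ∀ N, ∫ ω in S N, (EN N).indicator (fun _ => l) ω ∂P ≤ ∫ ω in S N, (M T ω + a) ∂P := by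
    intro N
    have hd : Set.Pairwise (↑(Finset.range (N + 2))) (Function.onFun Disjoint (BB w T N)) :=
      fun i _ j _ hij => BB_disj w T N hij
    simp only [hS]
    rw [integral_biUnion_finset _ (fun k _ => hBm N k) hd
        (fun k _ => (hl _ (hENm N)).integrableOn),
      integral_biUnion_finset _ (fun k _ => hBm N k) hd
        (fun k _ => (hinteg T hT.le).integrableOn)]
    refine Finset.sum_le_sum fun k hk => ?_
    have hk' : k ≤ N + 1 := by have := Finset.mem_range.1 hk; omega
    have ht0 := gp_nonneg hT.le N k
    have htT := gp_le hT.le hk'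
    have e1 : ∫ ω in BB w T N k, (M T ω + a) ∂P = ∫ ω in BB w T N k, (M (gp T N k) ω + a) ∂P := by
      rw [integral_add (hM.1 T hT.le).2.integrableOn (integrable_const a).integrableOn,
        integral_add (hM.1 _ ht0).2.integrableOn (integrable_const a).integrableOn,
        mart_setIntegral hM ht0 htT (BB_meas hw hc hT N k)]
    rw [e1]
    refine setIntegral_mono_on (hl _ (hENm N)).integrableOn (hinteg _ ht0).integrableOn (hBm N k) ?_
    rintro ω ⟨h0, h1, h2, h3⟩
    by_cases hω : ω ∈ EN N
    · rw [Set.indicator_of_mem hω]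
      refine hlow' _ ⟨ht0, htT⟩ ω hω.1 h3 ?_
      rcases h1 with h1 | h1
      · exact h1
      · obtain ⟨j, hj, hj2⟩ := Set.mem_iUnion₂.1 hω.2
        have hj' := Finset.mem_range.1 hj
        rcases lt_or_ge j k with hjk | hjk
        · have := (h2 j hjk).1
          have hj3 : 0 ≤ w (gp T N j) ω := hj2
          linarith
        · have : j = k := by omega
          subst this
          exact hj2
    · rw [Set.indicator_of_notMem hω]
      exact hlow _ ⟨ht0, htT⟩ ω h3
  -- pass to the limit
  set F : ℕ → Ω → ℝ := fun N ω => (S N).indicator (fun ω => M T ω + a) ω -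
    (S N).indicator ((EN N).indicator fun _ => l) ω with hF
  set F0 : Ω → ℝ := fun ω => A0.indicator (fun ω => M T ω + a) ω - E.indicator (fun _ => l) ω
  have hlim : Tendsto (fun N => ∫ ω, F N ω ∂P) atTop (𝓝 (∫ ω, F0 ω ∂P)) := by
    refine tendsto_integral_of_dominated_convergence (fun ω => |M T ω + a| + |l|) ?_ ?_ ?_ ?_
    · intro N
      exact (((hinteg T hT.le).indicator (hSm N)).sub
        ((hl _ (hENm N)).indicator (hSm N))).aestronglyMeasurable
    · exact (hinteg T hT.le).abs.add (integrable_const _)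
    · intro N
      refine ae_of_all _ fun ω => ?_
      refine (norm_sub_le _ _).trans (add_le_add ?_ ?_)
      · exact norm_indicator_le_norm_self _ _
      · exact (norm_indicator_le_norm_self _ _).trans (norm_indicator_le_norm_self _ _)
    · refine ae_of_all _ fun ω => ?_
      refine tendsto_nhds_of_eventually_eq ?_
      by_cases h0 : ω ∈ A0
      · have h1 := BB_eventually hc hT ω h0
        by_cases h2 : ω ∈ E
        · obtain ⟨t, ht, hwt⟩ := hE1 ω h2
          filter_upwards [h1, hit_eventually (hc ω) hT ht hwt] with N ⟨k, hk, hk2⟩ ⟨j, hj, hj2⟩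
          have m1 : ω ∈ S N := Set.mem_iUnion₂.2 ⟨k, hk, hk2⟩
          have m2 : ω ∈ EN N := ⟨h2, Set.mem_iUnion₂.2 ⟨j, hj, hj2⟩⟩
          simp only [F, F0, Set.indicator_of_mem m1, Set.indicator_of_mem m2,
            Set.indicator_of_mem h0, Set.indicator_of_mem h2]
        · filter_upwards [h1] with N ⟨k, hk, hk2⟩
          have m1 : ω ∈ S N := Set.mem_iUnion₂.2 ⟨k, hk, hk2⟩
          have m2 : ω ∉ EN N := fun h => h2 h.1
          simp only [F, F0, Set.indicator_of_mem m1, Set.indicator_of_notMem m2,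
            Set.indicator_of_mem h0, Set.indicator_of_notMem h2]
      · refine Eventually.of_forall fun N => ?_
        have m1 : ω ∉ S N := by
          intro h
          obtain ⟨k, hk, hk2⟩ := Set.mem_iUnion₂.1 h
          exact h0 hk2.1
        have h2 : ω ∉ E := fun h => h0 (hE0 ω h)
        simp only [F, F0, Set.indicator_of_notMem m1, Set.indicator_of_notMem h0,
          Set.indicator_of_notMem h2]
  have hpos : 0 ≤ ∫ ω, F0 ω ∂P := by
    refine ge_of_tendsto' hlim fun N => ?_
    have : ∫ ω, F N ω ∂P = ∫ ω in S N, (M T ω + a) ∂P -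
        ∫ ω in S N, (EN N).indicator (fun _ => l) ω ∂P := by
      simp only [hF]
      rw [integral_sub ((hinteg T hT.le).indicator (hSm N)) ((hl _ (hENm N)).indicator (hSm N)),
        integral_indicator (hSm N), integral_indicator (hSm N)]
    rw [this]
    linarith [key N]
  have e0 : ∫ ω, F0 ω ∂P = ∫ ω in A0, (M T ω + a) ∂P - l * P.real E := by
    simp only [F0]
    rw [integral_sub ((hinteg T hT.le).indicator hA0m') (hl _ hE),
        integral_indicator hA0m', integral_indicator hE]
    simp [mul_comm]
  have e1 : ∫ ω in A0, (M T ω + a) ∂P = ∫ ω in A0, (M 0 ω + a) ∂P := by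
    rw [integral_add (hM.1 T hT.le).2.integrableOn (integrable_const a).integrableOn,
        integral_add (hM.1 _ le_rfl).2.integrableOn (integrable_const a).integrableOn,
        mart_setIntegral hM le_rfl hT.le hA0m]
  linarith

lemma setIntegral_le_junk {G : ℝ → ℝ} {c t : ℝ} (hc : 0 ≤ c) (ht : 0 ≤ t)
    (h : ∀ s ∈ Set.Ioc 0 t, G s ≤ c) : ∫ s in Set.Ioc (0 : ℝ) t, G s ≤ c * t := by
  by_cases hi : IntegrableOn G (Set.Ioc 0 t)
  · have h1 : ∫ s in Set.Ioc (0 : ℝ) t, G s ≤ ∫ _s in Set.Ioc (0 : ℝ) t, c := by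
      refine setIntegral_mono_on hi ?_ measurableSet_Ioc h
      exact integrableOn_const (by simp) (by simp)
    refine h1.trans (le_of_eq ?_)
    simp [ht, mul_comm]
  · rw [integral_undef hi]; positivity

lemma meas_forall {Ω : Type} {mΩ : MeasurableSpace Ω} {u : ℝ → Ω → ℝ}
    (hu : ∀ t, Measurable (u t)) (hc : ∀ ω, Continuous fun t => u t ω) {T c : ℝ} (hT : 0 ≤ T) :
    MeasurableSet {ω | ∀ t ∈ Set.Icc 0 T, u t ω ≤ c} := by
  have e : {ω | ∀ t ∈ Set.Icc 0 T, u t ω ≤ c} =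
      ⋂ q : ℚ, {ω | u (max 0 (min (q : ℝ) T)) ω ≤ c} := by
    ext ω
    rw [Set.mem_ofPred_eq, forall_clamp (hc ω) hT]
    simp
  rw [e]
  exact MeasurableSet.iInter fun q => hu _ measurableSet_Iic

lemma tail_bound_R {n m d : ℕ} {C : Coeffs n m d} {ε : ℝ} {Ω : Type} [mΩ : MeasurableSpace Ω]
    {P : Measure Ω} [IsProbabilityMeasure P] {ℱ : Filtration ℝ mΩ} {X : ℝ → Ω → Vec n}
    {Y : ℝ → Ω → Vec m} {ξ : Ω → Vec n} {ζ : Ω → Vec m}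
    (hsol : IsSFSolution C ε P ℱ X Y ξ ζ) (k : ℕ) {c : ℝ} (hc : 0 ≤ c)
    (hgen : ∀ x μ y, memP2 μ →
      ⟪ε⁻¹ • C.f x μ y + (Real.sqrt ε)⁻¹ • C.h x μ y, gradient (VV k) y⟫ +
      (1 / (2 * ε)) * trCLM (((C.g x μ y).comp (adj (C.g x μ y))).comp (hess (VV k) y)) ≤ c)
    {T : ℝ} (hT : 0 < T) {r : ℝ} (hr : 0 < r) (N : ℕ) :
    (1 + r ^ 2) ^ (k + 2) * P.real {ω | ‖Y 0 ω‖ < r ∧ (¬ ∀ t ∈ Set.Icc 0 T, ‖Y t ω‖ ≤ r) ∧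
      ∀ t ∈ Set.Icc 0 T, ‖X t ω‖ ≤ N} ≤
    ∫ ω in {ω | ‖Y 0 ω‖ < r}, (VV k (Y 0 ω) + c * T) ∂P := by
  set R : ℝ := N + 1 with hR
  have hRpos : 0 < R := by positivity
  let β1 : ContDiffBump (0 : Vec n) := ⟨R + 2, R + 3, by linarith, by linarith⟩
  let β2 : ContDiffBump (0 : Vec m) := ⟨r + 2, r + 3, by linarith, by linarith⟩
  let φ : Vec n → Vec m → ℝ := fun x y => β1 x * β2 y * VV k y
  have hφ : TestFun2 φ := by
    constructor
    · have h1 : ContDiff ℝ 2 (fun p : Vec n × Vec m => β1 p.1) := β1.contDiff.comp contDiff_fst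
      have h2 : ContDiff ℝ 2 (fun p : Vec n × Vec m => β2 p.2) := β2.contDiff.comp contDiff_snd
      have h3 : ContDiff ℝ 2 (fun p : Vec n × Vec m => VV k p.2) :=
        (contDiff_VV k).comp contDiff_snd
      exact (h1.mul h2).mul h3
    · refine HasCompactSupport.intro
        (K := Metric.closedBall (0 : Vec n) (R + 3) ×ˢ Metric.closedBall (0 : Vec m) (r + 3))
        ((isCompact_closedBall _ _).prod (isCompact_closedBall _ _)) ?_
      rintro ⟨x, y⟩ hxy
      rw [Set.mem_prod, not_and_or] at hxy
      simp only [Function.uncurry, φ]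
      rcases hxy with h | h
      · rw [Metric.mem_closedBall, not_le] at h
        rw [β1.zero_of_le_dist h.le]; simp
      · rw [Metric.mem_closedBall, not_le] at h
        rw [β2.zero_of_le_dist h.le]; simp
  have hφV : ∀ x ∈ Metric.ball (0 : Vec n) (R + 2), ∀ y ∈ Metric.ball (0 : Vec m) (r + 2),
      φ x y = VV k y := by
    intro x hx y hy
    simp only [φ]
    rw [β1.one_of_mem_closedBall (Metric.ball_subset_closedBall hx),
      β2.one_of_mem_closedBall (Metric.ball_subset_closedBall hy)]
    ring
  have hM := hsol.mart φ hφ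
  set M : ℝ → Ω → ℝ := fun t ω => φ (X t ω) (Y t ω) -
        ∫ s in Set.Ioc (0 : ℝ) t, genSF C ε (P.map (X s)) φ (X s ω) (Y s ω) with hMdef
  set w : ℝ → Ω → ℝ := fun t ω => max (‖X t ω‖ - R) (‖Y t ω‖ - r) with hw
  have hwm : ∀ t, Measurable[ℱ t] (w t) := by
    intro t
    have h1 : Measurable[ℱ t] (fun ω => ‖X t ω‖ - R) :=
      (measurable_norm.comp (hsol.adaptX t)).sub_const R
    have h2 : Measurable[ℱ t] (fun ω => ‖Y t ω‖ - r) :=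
      (measurable_norm.comp (hsol.adaptY t)).sub_const r
    exact h1.max h2
  have hwc : ∀ ω, Continuous fun t => w t ω := by
    intro ω
    have h1 := hsol.contX ω
    have h2 := hsol.contY ω
    simp only [hw]
    fun_prop
  have hVpos : ∀ y : Vec m, 0 ≤ VV k y := fun y => by unfold VV; positivity
  have hlower : ∀ t ∈ Set.Icc 0 T, ∀ ω, (∀ s ∈ Set.Icc 0 t, w s ω ≤ 1) →
      VV k (Y t ω) ≤ M t ω + c * T := by
    intro t ht ω h
    have hb : ∀ s ∈ Set.Icc 0 t, X s ω ∈ Metric.ball (0 : Vec n) (R + 2) ∧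
        Y s ω ∈ Metric.ball (0 : Vec m) (r + 2) := by
      intro s hs
      have h1 := max_le_iff.1 (h s hs)
      rw [mem_ball_zero_iff, mem_ball_zero_iff]
      constructor <;> linarith [h1.1, h1.2]
    have h1 : ∫ s in Set.Ioc (0 : ℝ) t, genSF C ε (P.map (X s)) φ (X s ω) (Y s ω) ≤ c * t := by
      refine setIntegral_le_junk hc ht.1 fun s hs => ?_
      have hs' : s ∈ Set.Icc 0 t := ⟨hs.1.le, hs.2⟩
      rw [genSF_local C ε _ φ (VV k) _ _ _ _ Metric.isOpen_ball Metric.isOpen_ball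
        (hb s hs').1 (hb s hs').2 hφV]
      exact hgen _ _ _ (hsol.lawP2X s hs.1.le)
    have h2 : c * t ≤ c * T := by gcongr; exact ht.2
    have h3 := hφV _ (hb t ⟨ht.1, le_rfl⟩).1 _ (hb t ⟨ht.1, le_rfl⟩).2
    simp only [hMdef]
    rw [h3]
    linarith
  set E : Set Ω := {ω | ‖Y 0 ω‖ < r ∧ (¬ ∀ t ∈ Set.Icc 0 T, ‖Y t ω‖ ≤ r) ∧
      ∀ t ∈ Set.Icc 0 T, ‖X t ω‖ ≤ N} with hEdef
  have hEm : MeasurableSet E := by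
    have h1 : MeasurableSet {ω | ‖Y 0 ω‖ < r} := (hsol.measY 0).norm measurableSet_Iio
    have h2 := meas_forall (u := fun t ω => ‖Y t ω‖) (fun t => (hsol.measY t).norm)
      (fun ω => (hsol.contY ω).norm) (c := r) hT.le
    have h3 := meas_forall (u := fun t ω => ‖X t ω‖) (fun t => (hsol.measX t).norm)
      (fun ω => (hsol.contX ω).norm) (c := N) hT.le
    exact h1.inter (h2.compl.inter h3)
  have hmain := max_ineq hM hwm hwc hT (a := c * T) (l := (1 + r ^ 2) ^ (k + 2)) E hEm ?_ ?_ ?_ ?_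
  · refine hmain.trans ?_
    have hA0 : MeasurableSet {ω | w 0 ω < 0} := ((hwm 0).mono (ℱ.le 0) le_rfl) measurableSet_Iio
    have hA1 : MeasurableSet {ω | ‖Y 0 ω‖ < r} := (hsol.measY 0).norm measurableSet_Iio
    have e1 : ∫ ω in {ω | w 0 ω < 0}, (M 0 ω + c * T) ∂P =
        ∫ ω in {ω | w 0 ω < 0}, (VV k (Y 0 ω) + c * T) ∂P := by
      refine setIntegral_congr_fun hA0 fun ω hω => ?_
      have h1 : ‖X 0 ω‖ - R < 0 ∧ ‖Y 0 ω‖ - r < 0 := max_lt_iff.1 hω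
      have h2 := hφV (X 0 ω) (by rw [mem_ball_zero_iff]; linarith [h1.1]) (Y 0 ω)
        (by rw [mem_ball_zero_iff]; linarith [h1.2])
      simp [hMdef, h2]
    rw [e1]
    have hsub : {ω | w 0 ω < 0} ⊆ {ω | ‖Y 0 ω‖ < r} := by
      intro ω hω
      have h1 : ‖X 0 ω‖ - R < 0 ∧ ‖Y 0 ω‖ - r < 0 := max_lt_iff.1 hω
      exact sub_neg.1 h1.2
    refine setIntegral_mono_set ?_ ?_ hsub.eventuallyLE
    · refine Integrable.add ?_ (integrable_const _)
      have hVm : Measurable fun ω => VV k (Y 0 ω) :=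
        (contDiff_VV k).continuous.measurable.comp (hsol.measY 0)
      refine Integrable.of_bound hVm.aestronglyMeasurable ((1 + r ^ 2) ^ (k + 2)) ?_
      refine (ae_restrict_mem hA1).mono fun ω hω => ?_
      have hω' : ‖Y 0 ω‖ < r := hω
      rw [Real.norm_of_nonneg (hVpos _)]
      unfold VV
      gcongr
    · exact ae_of_all _ fun ω => add_nonneg (hVpos _) (by positivity)
  · intro ω hω
    have h1 := hω.2.2 0 ⟨le_rfl, hT.le⟩
    have h2 := hω.1
    refine max_lt ?_ ?_ <;> linarith
  · intro ω hω
    have := hω.2.1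
    push Not at this
    obtain ⟨t, ht, htr⟩ := this
    exact ⟨t, ht, lt_max_of_lt_right (by linarith)⟩
  · intro t ht ω h
    exact (hVpos _).trans (hlower t ht ω h)
  · intro t ht ω hω h h0
    refine le_trans ?_ (hlower t ht ω h)
    have h1 := hω.2.2 t ht
    have h2 : r ≤ ‖Y t ω‖ := by
      rcases le_max_iff.1 h0 with h3 | h3 <;> linarith
    unfold VV
    gcongr

lemma tail_bound {n m d : ℕ} {C : Coeffs n m d} {ε : ℝ} {Ω : Type} [mΩ : MeasurableSpace Ω]
    {P : Measure Ω} [IsProbabilityMeasure P] {ℱ : Filtration ℝ mΩ} {X : ℝ → Ω → Vec n}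
    {Y : ℝ → Ω → Vec m} {ξ : Ω → Vec n} {ζ : Ω → Vec m}
    (hsol : IsSFSolution C ε P ℱ X Y ξ ζ) (k : ℕ) {c : ℝ} (hc : 0 ≤ c)
    (hgen : ∀ x μ y, memP2 μ →
      ⟪ε⁻¹ • C.f x μ y + (Real.sqrt ε)⁻¹ • C.h x μ y, gradient (VV k) y⟫ +
      (1 / (2 * ε)) * trCLM (((C.g x μ y).comp (adj (C.g x μ y))).comp (hess (VV k) y)) ≤ c)
    {T : ℝ} (hT : 0 < T) {r : ℝ} (hr : 0 < r) :
    (1 + r ^ 2) ^ (k + 2) * P.real {ω | ‖Y 0 ω‖ < r ∧ ¬ ∀ t ∈ Set.Icc 0 T, ‖Y t ω‖ ≤ r} ≤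
    ∫ ω in {ω | ‖Y 0 ω‖ < r}, (VV k (Y 0 ω) + c * T) ∂P := by
  set S : ℕ → Set Ω := fun N => {ω | ‖Y 0 ω‖ < r ∧ (¬ ∀ t ∈ Set.Icc 0 T, ‖Y t ω‖ ≤ r) ∧
      ∀ t ∈ Set.Icc 0 T, ‖X t ω‖ ≤ N} with hS
  have hmono : Monotone S := by
    rintro a b hab ω ⟨h1, h2, h3⟩
    exact ⟨h1, h2, fun t ht => (h3 t ht).trans (by exact_mod_cast hab)⟩
  have hU : {ω | ‖Y 0 ω‖ < r ∧ ¬ ∀ t ∈ Set.Icc 0 T, ‖Y t ω‖ ≤ r} = ⋃ N, S N := by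
    ext ω
    rw [Set.mem_iUnion]
    constructor
    · rintro ⟨h1, h2⟩
      obtain ⟨B, hB⟩ := (isCompact_Icc (a := (0 : ℝ)) (b := T)).bddAbove_image
        (hsol.contX ω).norm.continuousOn
      obtain ⟨N, hN⟩ := exists_nat_ge B
      exact ⟨N, h1, h2, fun t ht => (hB ⟨t, ht, rfl⟩).trans hN⟩
    · rintro ⟨N, h1, h2, h3⟩
      exact ⟨h1, h2⟩
  rw [hU]
  have h1 : Tendsto (fun N => P.real (S N)) atTop (𝓝 (P.real (⋃ N, S N))) :=
    (ENNReal.tendsto_toReal (measure_ne_top _ _)).comp (tendsto_measure_iUnion_atTop hmono)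
  exact le_of_tendsto' (h1.const_mul _) fun N => tail_bound_R hsol k hc hgen hT hr N

lemma lint_tail {a p q : ℝ} (ha : 0 < a) (hpq : p < q) :
    ∫⁻ r in Set.Ioi (0 : ℝ), (if a < r then ENNReal.ofReal (r ^ (p - 1 - q)) else 0) =
      ENNReal.ofReal (a ^ (p - q) / (q - p)) := by
  have e1 : ∀ r : ℝ, (if a < r then ENNReal.ofReal (r ^ (p - 1 - q)) else 0) =
      (Set.Ioi a).indicator (fun r => ENNReal.ofReal (r ^ (p - 1 - q))) r := by
    intro r; simp [Set.indicator]
  simp_rw [e1]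
  rw [lintegral_indicator measurableSet_Ioi, Measure.restrict_restrict measurableSet_Ioi]
  have e2 : Set.Ioi a ∩ Set.Ioi 0 = Set.Ioi a := by
    rw [Set.Ioi_inter_Ioi, sup_eq_left.2 ha.le]
  have hlt : p - 1 - q < -1 := by linarith
  rw [e2, ← ofReal_integral_eq_lintegral_ofReal (integrableOn_Ioi_rpow_of_lt hlt ha)]
  · rw [integral_Ioi_rpow_of_lt hlt ha]
    congr 1
    rw [show p - 1 - q + 1 = -(q - p) by ring, neg_div_neg_eq]
    congr 2; ring
  · filter_upwards [ae_restrict_mem measurableSet_Ioi] with r hr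
    exact Real.rpow_nonneg (ha.trans hr).le _

lemma layer {Ω : Type} {mΩ : MeasurableSpace Ω} {P : Measure Ω} [IsProbabilityMeasure P]
    {S η : Ω → ℝ} (hS : Measurable S) (hη : Measurable η) (hS0 : ∀ ω, 0 ≤ S ω)
    (hη1 : ∀ ω, 1 ≤ η ω) {p q A b : ℝ} (hp : 0 < p) (hpq : p < q) (hA : 0 ≤ A) (hb : 0 ≤ b)
    (h : ∀ r : ℝ, 0 < r → P {ω | r < S ω} ≤ P {ω | r ≤ η ω} +
      ENNReal.ofReal (r ^ (-q)) * ∫⁻ ω in {ω | η ω < r}, ENNReal.ofReal (A * η ω ^ q + b) ∂P) :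
    ∫⁻ ω, ENNReal.ofReal (S ω ^ p) ∂P ≤ ∫⁻ ω, ENNReal.ofReal (η ω ^ p) ∂P +
      ENNReal.ofReal (p / (q - p)) * ∫⁻ ω, ENNReal.ofReal (A * η ω ^ p + b) ∂P := by
  have hqp : 0 < q - p := by linarith
  rw [lintegral_rpow_eq_lintegral_meas_lt_mul P (ae_of_all _ hS0) hS.aemeasurable hp,
    lintegral_rpow_eq_lintegral_meas_le_mul P (ae_of_all _ fun ω => zero_le_one.trans (hη1 ω))
      hη.aemeasurable hp]
  let F : ℝ → Ω → ℝ≥0∞ := fun r ω =>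
    (if η ω < r then ENNReal.ofReal (r ^ (p - 1 - q)) else 0) * ENNReal.ofReal (A * η ω ^ q + b)
  have hFm : Measurable (Function.uncurry F) := by
    refine Measurable.mul (Measurable.ite ?_ ?_ measurable_const) ?_
    · exact measurableSet_lt (hη.comp measurable_snd) measurable_fst
    · exact ENNReal.measurable_ofReal.comp (measurable_fst.pow_const _)
    · exact ENNReal.measurable_ofReal.comp
        ((((hη.comp measurable_snd).pow_const _).const_mul _).add_const _)
  have step1 : ∫⁻ r in Set.Ioi (0 : ℝ), P {ω | r < S ω} * ENNReal.ofReal (r ^ (p - 1)) ≤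
      (∫⁻ r in Set.Ioi (0 : ℝ), P {ω | r ≤ η ω} * ENNReal.ofReal (r ^ (p - 1))) +
      ∫⁻ r in Set.Ioi (0 : ℝ), ∫⁻ ω, F r ω ∂P := by
    rw [← lintegral_add_right _ hFm.lintegral_prod_right]
    refine setLIntegral_mono_ae' measurableSet_Ioi (ae_of_all _ fun r hr => ?_)
    have hr : 0 < r := hr
    refine (mul_le_mul_left (h r hr) _).trans ?_
    rw [add_mul]
    refine add_le_add_right (le_of_eq ?_) _
    have hm : MeasurableSet {ω | η ω < r} := hη measurableSet_Iio
    have e1 : ∀ ω, F r ω = ENNReal.ofReal (r ^ (p - 1 - q)) *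
        ({ω | η ω < r}.indicator (fun ω => ENNReal.ofReal (A * η ω ^ q + b)) ω) := by
      intro ω
      by_cases hω : η ω < r <;> simp [F, Set.indicator, hω]
    simp_rw [e1]
    rw [lintegral_const_mul, lintegral_indicator hm, mul_right_comm,
      ← ENNReal.ofReal_mul (Real.rpow_nonneg hr.le _), ← Real.rpow_add hr]
    · congr 3; ring
    · exact (ENNReal.measurable_ofReal.comp
        (((hη.pow_const _).const_mul _).add_const _)).indicator hm
  have step2 : ∫⁻ r in Set.Ioi (0 : ℝ), ∫⁻ ω, F r ω ∂P ≤
      ENNReal.ofReal (1 / (q - p)) * ∫⁻ ω, ENNReal.ofReal (A * η ω ^ p + b) ∂P := by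
    rw [lintegral_lintegral_swap hFm.aemeasurable, ← lintegral_const_mul']
    · refine lintegral_mono fun ω => ?_
      have h1 : 0 < η ω := zero_lt_one.trans_le (hη1 ω)
      simp only [F]
      rw [lintegral_mul_const', lint_tail h1 hpq, ← ENNReal.ofReal_mul (by positivity),
        ← ENNReal.ofReal_mul (by positivity)]
      · apply ENNReal.ofReal_le_ofReal
        rw [div_mul_eq_mul_div, div_mul_eq_mul_div]
        refine div_le_div_of_nonneg_right ?_ hqp.le
        have e : η ω ^ (p - q) * η ω ^ q = η ω ^ p := by
          rw [← Real.rpow_add h1]; congr 1; ring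
        have e' : η ω ^ (p - q) ≤ 1 :=
          Real.rpow_le_one_of_one_le_of_nonpos (hη1 ω) (by linarith)
        nlinarith
      · exact ENNReal.ofReal_ne_top
    · exact ENNReal.ofReal_ne_top
  refine (mul_le_mul_right (step1.trans (add_le_add_right step2 _)) _).trans (le_of_eq ?_)
  rw [mul_add, ← mul_assoc, ← ENNReal.ofReal_mul hp.le, mul_one_div]

lemma pathsup {Ω : Type} {mΩ : MeasurableSpace Ω} {u : ℝ → Ω → ℝ}
    (hu : ∀ t, Measurable (u t)) (hc : ∀ ω, Continuous fun t => u t ω) {T : ℝ} (hT : 0 ≤ T) :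
    ∃ S : Ω → ℝ, Measurable S ∧ ∀ ω c, S ω ≤ c ↔ ∀ t ∈ Set.Icc 0 T, u t ω ≤ c := by
  have key : ∀ ω c, sSup ((fun t => u t ω) '' Set.Icc 0 T) ≤ c ↔ ∀ t ∈ Set.Icc 0 T, u t ω ≤ c := by
    intro ω c
    rw [csSup_le_iff (isCompact_Icc.image (hc ω)).bddAbove
      ((Set.nonempty_Icc.2 hT).image _)]
    exact Set.forall_mem_image
  refine ⟨fun ω => sSup ((fun t => u t ω) '' Set.Icc 0 T), ?_, key⟩
  refine measurable_of_Iic fun c => ?_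
  have := meas_forall hu hc (c := c) hT
  convert this using 1
  ext ω
  exact key ω c

lemma VV_le {m : ℕ} (k : ℕ) (y : Vec m) :
    VV k y ≤ 2 ^ (k + 2) * (max 1 ‖y‖) ^ (((2 * (k + 2) : ℕ)) : ℝ) := by
  rw [Real.rpow_natCast, pow_mul, ← mul_pow, VV]
  have h1 : 1 ≤ max 1 ‖y‖ := le_max_left _ _
  have h2 : ‖y‖ ≤ max 1 ‖y‖ := le_max_right _ _
  have h3 := norm_nonneg y
  refine pow_le_pow_left₀ (by positivity) ?_ _
  nlinarith

lemma sup_bound {n m d : ℕ} {C : Coeffs n m d} {ε : ℝ} {Ω : Type} [mΩ : MeasurableSpace Ω]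
    {P : Measure Ω} [IsProbabilityMeasure P] {ℱ : Filtration ℝ mΩ} {X : ℝ → Ω → Vec n}
    {Y : ℝ → Ω → Vec m} {ξ : Ω → Vec n} {ζ : Ω → Vec m}
    (hsol : IsSFSolution C ε P ℱ X Y ξ ζ) (k : ℕ) {c : ℝ} (hc : 0 ≤ c)
    (hgen : ∀ x μ y, memP2 μ →
      ⟪ε⁻¹ • C.f x μ y + (Real.sqrt ε)⁻¹ • C.h x μ y, gradient (VV k) y⟫ +
      (1 / (2 * ε)) * trCLM (((C.g x μ y).comp (adj (C.g x μ y))).comp (hess (VV k) y)) ≤ c)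
    {T : ℝ} (hT : 0 < T) {p : ℝ} (hp : 0 < p) (hpk : p < ((2 * (k + 2) : ℕ) : ℝ)) :
    ∫⁻ ω, ENNReal.ofReal (⨆ t ∈ Set.Icc (0 : ℝ) T, ‖Y t ω‖ ^ p) ∂P ≤
      ∫⁻ ω, ENNReal.ofReal ((max 1 ‖Y 0 ω‖) ^ p) ∂P +
      ENNReal.ofReal (p / (((2 * (k + 2) : ℕ) : ℝ) - p)) *
        ∫⁻ ω, ENNReal.ofReal (2 ^ (k + 2) * (max 1 ‖Y 0 ω‖) ^ p + c * T) ∂P := by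
  obtain ⟨S, hSm, hS⟩ := pathsup (u := fun t ω => ‖Y t ω‖) (fun t => (hsol.measY t).norm)
    (fun ω => (hsol.contY ω).norm) hT.le
  have hS' : ∀ ω, ∀ t ∈ Set.Icc 0 T, ‖Y t ω‖ ≤ S ω := fun ω => (hS ω _).1 le_rfl
  have hS0 : ∀ ω, 0 ≤ S ω := fun ω =>
    (norm_nonneg _).trans (hS' ω 0 (Set.left_mem_Icc.2 hT.le))
  have hle : ∀ ω, (⨆ t ∈ Set.Icc (0 : ℝ) T, ‖Y t ω‖ ^ p) ≤ S ω ^ p := by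
    intro ω
    have h0 : 0 ≤ S ω ^ p := Real.rpow_nonneg (hS0 ω) _
    refine Real.iSup_le (fun t => Real.iSup_le (fun ht => ?_) h0) h0
    exact Real.rpow_le_rpow (norm_nonneg _) (hS' ω t ht) hp.le
  refine (lintegral_mono fun ω => ENNReal.ofReal_le_ofReal (hle ω)).trans ?_
  refine layer hSm (measurable_const.max (hsol.measY 0).norm) hS0 (fun ω => le_max_left _ _) hp hpk
    (by positivity) (by positivity) ?_
  intro r hr
  rcases le_or_gt r 1 with hr1 | hr1
  · refine le_add_right (measure_mono fun ω _ => ?_)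
    exact hr1.trans (le_max_left _ _)
  set E : Set Ω := {ω | ‖Y 0 ω‖ < r ∧ ¬ ∀ t ∈ Set.Icc 0 T, ‖Y t ω‖ ≤ r} with hE
  have hset : {ω | max 1 ‖Y 0 ω‖ < r} = {ω | ‖Y 0 ω‖ < r} := by
    ext ω; simp [hr1]
  have hsub : {ω | r < S ω} ⊆ {ω | r ≤ max 1 ‖Y 0 ω‖} ∪ E := by
    intro ω hω
    by_cases h : r ≤ max 1 ‖Y 0 ω‖
    · exact Or.inl h
    · right
      refine ⟨(le_max_right _ _).trans_lt (not_le.1 h), ?_⟩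
      rw [← hS ω r]
      exact not_le.2 hω
  refine (measure_mono hsub).trans ((measure_union_le _ _).trans (add_le_add_right ?_ _))
  have htb := tail_bound hsol k hc hgen hT hr
  rw [← hE] at htb
  rw [hset]
  have hmeas : MeasurableSet {ω | ‖Y 0 ω‖ < r} := (hsol.measY 0).norm measurableSet_Iio
  have hVm : Measurable fun ω => VV k (Y 0 ω) + c * T :=
    ((contDiff_VV k).continuous.measurable.comp (hsol.measY 0)).add_const _
  have hV0 : ∀ ω, 0 ≤ VV k (Y 0 ω) + c * T := by
    intro ω; unfold VV; positivity
  have h1 : r ^ (((2 * (k + 2) : ℕ)) : ℝ) * P.real E ≤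
      ∫ ω in {ω | ‖Y 0 ω‖ < r}, (VV k (Y 0 ω) + c * T) ∂P := by
    refine le_trans (mul_le_mul_of_nonneg_right ?_ measureReal_nonneg) htb
    rw [Real.rpow_natCast, pow_mul]
    exact pow_le_pow_left₀ (by positivity) (by linarith) _
  have h2 : P.real E ≤ r ^ (-(((2 * (k + 2) : ℕ)) : ℝ)) *
      ∫ ω in {ω | ‖Y 0 ω‖ < r}, (VV k (Y 0 ω) + c * T) ∂P := by
    rw [Real.rpow_neg hr.le, ← div_eq_inv_mul, le_div_iff₀ (Real.rpow_pos_of_pos hr _), mul_comm]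
    exact h1
  calc P E = ENNReal.ofReal (P.real E) := (ofReal_measureReal).symm
    _ ≤ _ := ENNReal.ofReal_le_ofReal h2
    _ = _ := ENNReal.ofReal_mul (Real.rpow_nonneg hr.le _)
    _ ≤ _ := by
      refine mul_le_mul_right ?_ _
      rw [integral_eq_lintegral_of_nonneg_ae (ae_of_all _ hV0) hVm.aestronglyMeasurable]
      refine ENNReal.ofReal_toReal_le.trans (lintegral_mono fun ω => ?_)
      exact ENNReal.ofReal_le_ofReal (add_le_add_left (VV_le k _) _)

/-- **Estimate (3.12).** Under conditions A1–A3, for any `p ≥ 2` there is `C_p > 0` such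
that for all `T ≥ 1` and sufficiently small `ε > 0`,
`E[sup_{t∈[0,T]} |Y^ε_t|ᵖ] ≤ C_p (1 + E|ζ|ᵖ) T ε^{-1}`. -/
theorem sup_moment_estimate_fast {n m d : ℕ} (C : Coeffs n m d) (SAh : SA13 C)
    {Ω : Type} [mΩ : MeasurableSpace Ω] (P : Measure Ω) (hP : IsProbabilityMeasure P)
    (ℱ : Filtration ℝ mΩ) (X : ℝ → ℝ → Ω → Vec n) (Y : ℝ → ℝ → Ω → Vec m)
    (ξ : Ω → Vec n) (ζ : Ω → Vec m)
    (hsol : ∀ ε ∈ Set.Ioo (0 : ℝ) 1, IsSFSolution C ε P ℱ (X ε) (Y ε) ξ ζ)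
    (p : ℝ) (hp : 2 ≤ p) (hmom : (∫⁻ ω, (‖ζ ω‖₊ : ℝ≥0∞) ^ p ∂P) < ⊤) :
    ∃ Cp > (0 : ℝ), ∃ ε₀ ∈ Set.Ioc (0 : ℝ) 1, ∀ T : ℝ, 1 ≤ T →
      ∀ ε ∈ Set.Ioo (0 : ℝ) ε₀,
        ∫ ω, (⨆ t ∈ Set.Icc (0 : ℝ) T, ‖Y ε t ω‖ ^ p) ∂P ≤
          Cp * (1 + ∫ ω, ‖ζ ω‖ ^ p ∂P) * T / ε := by
  set k : ℕ := ⌈p⌉₊ with hk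
  have hpk : p < ((2 * (k + 2) : ℕ) : ℝ) := by
    have := Nat.le_ceil p
    push_cast
    linarith
  obtain ⟨C0, hC0, ε₀, hε₀, hgen⟩ := gen_bound C SAh k
  set κ : ℝ := p / (((2 * (k + 2) : ℕ) : ℝ) - p) with hκ
  have hκ0 : 0 ≤ κ := div_nonneg (by linarith) (by linarith)
  refine ⟨1 + κ * 2 ^ (k + 2) + κ * C0, by positivity, ε₀, hε₀, ?_⟩
  intro T hT ε hε
  have hε0 : 0 < ε := hε.1
  have hε1 : ε < 1 := hε.2.trans_le hε₀.2
  have hs := hsol ε ⟨hε.1, hε1⟩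
  have hp0 : 0 < p := by linarith
  have hT0 : 0 < T := by linarith
  set I : ℝ := ∫ ω, ‖ζ ω‖ ^ p ∂P with hI
  have hI0 : 0 ≤ I := integral_nonneg fun ω => Real.rpow_nonneg (norm_nonneg _) _
  have hsup0 : ∀ ω, 0 ≤ ⨆ t ∈ Set.Icc (0 : ℝ) T, ‖Y ε t ω‖ ^ p := fun ω =>
    Real.iSup_nonneg fun t => Real.iSup_nonneg fun _ => Real.rpow_nonneg (norm_nonneg _) _
  by_cases hinteg : Integrable (fun ω => ⨆ t ∈ Set.Icc (0 : ℝ) T, ‖Y ε t ω‖ ^ p) P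
  swap
  · rw [integral_undef hinteg]; positivity
  have hb := sup_bound hs k (c := C0 / ε) (by positivity) (fun x μ y h => hgen ε hε x μ y h)
    hT0 hp0 hpk
  rw [← hκ, ← ofReal_integral_eq_lintegral_ofReal hinteg (ae_of_all _ hsup0)] at hb
  have hY0 : Integrable (fun ω => ‖Y ε 0 ω‖ ^ p) P := by
    refine ⟨((hs.measY 0).norm.pow_const p).aestronglyMeasurable, ?_⟩
    refine lt_of_le_of_lt (le_of_eq (lintegral_congr_ae ?_)) hmom
    filter_upwards [hs.initY] with ω hω
    rw [hω, Real.enorm_of_nonneg (Real.rpow_nonneg (norm_nonneg _) _),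
      ← ENNReal.ofReal_rpow_of_nonneg (norm_nonneg _) hp0.le, ofReal_norm]
    rfl
  have hIeq : ∫ ω, ‖Y ε 0 ω‖ ^ p ∂P = I := by
    refine integral_congr_ae ?_
    filter_upwards [hs.initY] with ω hω
    rw [hω]
  have hη : ∀ ω, (max 1 ‖Y ε 0 ω‖) ^ p ≤ 1 + ‖Y ε 0 ω‖ ^ p := by
    intro ω
    have h0 : 0 ≤ ‖Y ε 0 ω‖ ^ p := Real.rpow_nonneg (norm_nonneg _) _
    rcases le_total 1 ‖Y ε 0 ω‖ with h | h
    · rw [max_eq_right h]; linarith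
    · rw [max_eq_left h, Real.one_rpow]; linarith
  have hi1 : Integrable (fun ω => 1 + ‖Y ε 0 ω‖ ^ p) P := (integrable_const _).add hY0
  have hi2 : Integrable (fun ω => 2 ^ (k + 2) * (1 + ‖Y ε 0 ω‖ ^ p) + C0 / ε * T) P :=
    (hi1.const_mul _).add (integrable_const _)
  have e1 : ∫ ω, (1 + ‖Y ε 0 ω‖ ^ p) ∂P = 1 + I := by
    rw [integral_add (integrable_const _) hY0, hIeq]; simp
  have e2 : ∫ ω, (2 ^ (k + 2) * (1 + ‖Y ε 0 ω‖ ^ p) + C0 / ε * T) ∂P =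
      2 ^ (k + 2) * (1 + I) + C0 / ε * T := by
    rw [integral_add (hi1.const_mul _) (integrable_const _), integral_const_mul, e1]; simp
  have hn : ∀ ω, 0 ≤ ‖Y ε 0 ω‖ ^ p := fun ω => Real.rpow_nonneg (norm_nonneg _) _
  have b1 : ∫⁻ ω, ENNReal.ofReal ((max 1 ‖Y ε 0 ω‖) ^ p) ∂P ≤ ENNReal.ofReal (1 + I) := by
    rw [← e1, ofReal_integral_eq_lintegral_ofReal hi1
      (ae_of_all _ fun ω => add_nonneg zero_le_one (hn ω))]
    exact lintegral_mono fun ω => ENNReal.ofReal_le_ofReal (hη ω)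
  have b2 : ∫⁻ ω, ENNReal.ofReal (2 ^ (k + 2) * (max 1 ‖Y ε 0 ω‖) ^ p + C0 / ε * T) ∂P ≤
      ENNReal.ofReal (2 ^ (k + 2) * (1 + I) + C0 / ε * T) := by
    rw [← e2, ofReal_integral_eq_lintegral_ofReal hi2 (ae_of_all _ fun ω => ?_)]
    · exact lintegral_mono fun ω => ENNReal.ofReal_le_ofReal
        (add_le_add_left (mul_le_mul_of_nonneg_left (hη ω) (by positivity)) _)
    · have := hn ω
      show 0 ≤ 2 ^ (k + 2) * (1 + ‖Y ε 0 ω‖ ^ p) + C0 / ε * T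
      positivity
  have b3 := hb.trans (add_le_add b1 (mul_le_mul_right b2 _))
  rw [← ENNReal.ofReal_mul hκ0, ← ENNReal.ofReal_add (by positivity) (by positivity),
    ENNReal.ofReal_le_ofReal_iff (by positivity)] at b3
  refine b3.trans ?_
  have hQ : 1 ≤ T / ε := by
    rw [le_div_iff₀ hε0]; linarith
  have e3 : (1 + κ * 2 ^ (k + 2) + κ * C0) * (1 + I) * T / ε =
      (1 + κ * 2 ^ (k + 2) + κ * C0) * (1 + I) * (T / ε) := by ring
  have e4 : C0 / ε * T = C0 * (T / ε) := by ring
  rw [e3, e4]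
  generalize T / ε = Q at hQ
  have g1 : (1 + κ * 2 ^ (k + 2)) * (1 + I) ≤ (1 + κ * 2 ^ (k + 2)) * (1 + I) * Q :=
    le_mul_of_one_le_right (by positivity) hQ
  have g2 : κ * C0 * Q ≤ κ * C0 * Q * (1 + I) :=
    le_mul_of_one_le_right (by positivity) (by linarith)
  linarith

end DiffApprox
end
end

section
/- Assume the coefficients f,g satisfy the dissipativity and growth conditions A1–A2. Then there exist β ∈ (0,γ) and C > 0 such that for all y ∈ R^m and t ≥ 0, sup_{x∈R^n, μ∈P_2(R^n)} E|Y_t^{x,μ,y}|^6 ≤ e^{−βt}|y|^6 + C, and sup_{x∈R^n, μ∈P_2(R^n)} ∫_{R^m} |y|^6 ν^{x,μ}(dy) < ∞. -/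
open MeasureTheory Filter
open scoped ENNReal NNReal Topology RealInnerProductSpace

set_option maxSynthPendingDepth 3

noncomputable section

namespace DiffApprox

lemma cutoff1D (R : ℕ) : ∃ F k k' χ : ℝ → ℝ, ∃ c : ℝ,
    (∀ s, HasDerivAt F (k s) s) ∧ (∀ s, HasDerivAt k (k' s) s) ∧ Continuous k' ∧
    (∀ s, (R:ℝ) + 1 < s → F s = 0 ∧ k s = 0 ∧ k' s = 0) ∧
    (∀ s, 0 ≤ χ s ∧ χ s ≤ 1) ∧ (∀ s : ℝ, s ≤ R → χ s = 1) ∧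
    (∀ s, k s = 3 * s ^ 2 * χ s) ∧ (∀ s, k' s ≤ 6 * s * χ s) ∧
    (∀ s, 0 ≤ s → F s + c ≤ s ^ 3) ∧ (∀ s : ℝ, 0 ≤ s → s ≤ R → F s + c = s ^ 3) ∧
    (∀ s, 0 ≤ s → 0 ≤ F s + c) := by
  set χ : ℝ → ℝ := fun s => Real.smoothTransition ((R:ℝ) + 1 - s) with hχ
  have hχsm : ContDiff ℝ 1 χ :=
    (Real.smoothTransition.contDiff (n := 1)).comp (contDiff_const.sub contDiff_id)
  have hχd : ∀ s, HasDerivAt χ (deriv χ s) s := fun s =>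
    (hχsm.differentiable (by norm_num)).differentiableAt.hasDerivAt
  have hχanti : Antitone χ := fun a b hab => Real.smoothTransition.monotone (by linarith)
  have hdc : Continuous (deriv χ) := hχsm.continuous_deriv (by norm_num)
  set k : ℝ → ℝ := fun s => 3 * s ^ 2 * χ s with hk
  have hkc : Continuous k := by have := hχsm.continuous; fun_prop
  have h01 : ∀ s, 0 ≤ χ s ∧ χ s ≤ 1 := fun s =>
    ⟨Real.smoothTransition.nonneg _, Real.smoothTransition.le_one _⟩
  have h1 : ∀ s : ℝ, s ≤ R → χ s = 1 := fun s hs =>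
    Real.smoothTransition.one_of_one_le (by linarith)
  have h0 : ∀ s, (R:ℝ) + 1 ≤ s → χ s = 0 := fun s hs =>
    Real.smoothTransition.zero_of_nonpos (by linarith)
  set I : ℝ → ℝ := fun s => ∫ u in (0:ℝ)..s, k u with hI
  have hId : ∀ s, HasDerivAt I (k s) s := fun s => hkc.integral_hasStrictDerivAt 0 s |>.hasDerivAt
  have hI3 : ∀ s : ℝ, ∫ u in (0:ℝ)..s, 3 * u ^ 2 = s ^ 3 := by
    intro s; rw [intervalIntegral.integral_const_mul, integral_pow]; norm_num; ring
  refine ⟨fun s => I s - I (R+1), k, fun s => 6 * s * χ s + 3 * s ^ 2 * deriv χ s, χ, I (R+1),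
    fun s => (hId s).sub_const _, ?_, ?_, ?_, h01, h1, fun s => rfl, ?_, ?_, ?_, ?_⟩
  · intro s
    have := (((hasDerivAt_id s).pow 2).const_mul 3).mul (hχd s)
    refine this.congr_deriv ?_
    simp; left; ring
  · have := hχsm.continuous; fun_prop
  · intro s hs
    refine ⟨?_, ?_, ?_⟩
    · show I s - I (R+1) = 0
      have : I s - I (R+1) = ∫ u in ((R:ℝ)+1)..s, k u :=
        intervalIntegral.integral_interval_sub_left (hkc.intervalIntegrable _ _)
          (hkc.intervalIntegrable _ _)
      rw [this, intervalIntegral.integral_congr (g := fun _ => 0)]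
      · simp
      · intro u hu
        rw [Set.uIcc_of_le hs.le] at hu
        simp [hk, h0 u hu.1]
    · simp [hk, h0 s hs.le]
    · have : deriv χ s = 0 := by
        have : χ =ᶠ[𝓝 s] fun _ => 0 := by
          filter_upwards [lt_mem_nhds hs] with u hu using h0 u hu.le
        rw [this.deriv_eq]; simp
      simp [this, h0 s hs.le]
  · intro s
    have : deriv χ s ≤ 0 := hχanti.deriv_nonpos
    nlinarith [sq_nonneg s, mul_nonneg (sq_nonneg s) (neg_nonneg.2 this)]
  · intro s hs
    simp only [sub_add_cancel]
    rw [← hI3 s]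
    apply intervalIntegral.integral_mono_on hs (hkc.intervalIntegrable _ _)
      (Continuous.intervalIntegrable (by fun_prop) _ _)
    intro u hu
    simp only [hk]
    nlinarith [sq_nonneg u, mul_nonneg (sq_nonneg u) (sub_nonneg.2 (h01 u).2)]
  · intro s hs hsR
    simp only [sub_add_cancel]
    rw [← hI3 s]
    apply intervalIntegral.integral_congr
    intro u hu
    rw [Set.uIcc_of_le hs] at hu
    simp [hk, h1 u (hu.2.trans hsR)]
  · intro s hs
    simp only [sub_add_cancel]
    apply intervalIntegral.integral_nonneg hs
    intro u hu
    have := (h01 u).1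
    simp only [hk]; positivity

lemma poly_absorb (A ε : ℝ) (hA : 0 ≤ A) (hε : 0 < ε) (j : ℕ) (hj : j < 6) :
    ∃ C, 0 ≤ C ∧ ∀ r : ℝ, 0 ≤ r → A * r ^ j ≤ ε * r ^ 6 + C := by
  refine ⟨A * (A / ε + 1) ^ j, by positivity, fun r hr => ?_⟩
  rcases le_total r (A / ε + 1) with h | h
  · have : A * r ^ j ≤ A * (A / ε + 1) ^ j := by gcongr
    have : 0 ≤ ε * r ^ 6 := by positivity
    linarith
  · have h1 : 1 ≤ r := le_trans (by have : 0 ≤ A / ε := by positivity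
                                    linarith) h
    have h2 : A ≤ ε * r := by
      have : A / ε ≤ r := by linarith
      rw [div_le_iff₀ hε] at this; linarith
    calc A * r ^ j ≤ (ε * r) * r ^ j := by gcongr
      _ = ε * r ^ (j + 1) := by ring
      _ ≤ ε * r ^ 6 := by gcongr; omega
      _ ≤ _ := by have : 0 ≤ A * (A / ε + 1) ^ j := by positivity
                  linarith

lemma rpow_absorb (ς δ : ℝ) (hς : ς ∈ Set.Ioo (0:ℝ) 1) (hδ : 0 < δ) :
    ∃ D, 0 ≤ D ∧ ∀ r : ℝ, 0 ≤ r → r ^ ς ≤ δ * r + D := by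
  have ht : Tendsto (fun r : ℝ => r ^ (-(1 - ς))) atTop (𝓝 0) :=
    tendsto_rpow_neg_atTop (by linarith [hς.2])
  obtain ⟨r0, hr0⟩ := eventually_atTop.1 (ht.eventually (gt_mem_nhds hδ))
  refine ⟨(max r0 1) ^ ς, by positivity, fun r hr => ?_⟩
  rcases le_total r (max r0 1) with h | h
  · have : r ^ ς ≤ (max r0 1) ^ ς := Real.rpow_le_rpow hr h hς.1.le
    have : 0 ≤ δ * r := by positivity
    linarith
  · have hr1 : 0 < r := lt_of_lt_of_le one_pos ((le_max_right _ _).trans h)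
    have h2 := hr0 r ((le_max_left _ _).trans h)
    have h3 : r ^ ς = r ^ (-(1 - ς)) * r := by
      rw [← Real.rpow_add_one hr1.ne']; congr 1; ring
    have : 0 ≤ (max r0 1) ^ ς := by positivity
    rw [h3]
    nlinarith

/-- The Lyapunov inequality in scalar form. -/
lemma scalar_bound_s16 (γ ς CG M : ℝ) (hγ : 0 < γ) (hς : ς ∈ Set.Ioo (0:ℝ) 1) (hM : 0 ≤ M) :
    ∃ C, 0 ≤ C ∧ ∀ r G : ℝ, 0 ≤ r → 0 ≤ G → G ≤ CG * (1 + r ^ ς) →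
      3 * r ^ 4 * (-γ * r ^ 2 + 2 * (|CG| * r) + M * G ^ 2) + 12 * r ^ 4 * G ^ 2 ≤
        C - γ / 2 * r ^ 6 := by
  set A := 3 * M + 12 with hA
  have hA0 : 0 < A := by positivity
  set B := A * (|CG| + 1) ^ 2 * 2 with hB
  have hB0 : 0 < B := by positivity
  obtain ⟨D, hD, hDr⟩ := rpow_absorb ς (Real.sqrt (γ / B)) hς (by positivity)
  obtain ⟨C1, hC1, h1⟩ := poly_absorb (6 * |CG|) (γ/2) (by positivity) (by positivity) 5 (by norm_num)
  obtain ⟨C2, hC2, h2⟩ := poly_absorb (B * (1 + D)^2) (γ/2) (by positivity) (by positivity) 4 (by norm_num)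
  refine ⟨C1 + C2, by positivity, fun r G hr hG hGr => ?_⟩
  have hG1 : G ≤ (|CG| + 1) * ((1 + D) + Real.sqrt (γ / B) * r) := by
    have a1 : (0:ℝ) ≤ r ^ ς := by positivity
    calc G ≤ CG * (1 + r ^ ς) := hGr
      _ ≤ (|CG| + 1) * (1 + r ^ ς) := by
        gcongr; linarith [le_abs_self CG]
      _ ≤ _ := by
        apply mul_le_mul_of_nonneg_left _ (by positivity)
        linarith [hDr r hr]
  have hs : Real.sqrt (γ / B) ^ 2 = γ / B := Real.sq_sqrt (by positivity)
  have hG2 : A * G ^ 2 ≤ B * (1 + D) ^ 2 + γ * r ^ 2 := by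
    calc A * G ^ 2 ≤ A * ((|CG| + 1) * ((1 + D) + Real.sqrt (γ / B) * r)) ^ 2 := by gcongr
      _ = A * (|CG| + 1) ^ 2 * ((1 + D) + Real.sqrt (γ / B) * r) ^ 2 := by ring
      _ ≤ A * (|CG| + 1) ^ 2 * (2 * ((1 + D)^2 + (Real.sqrt (γ / B) * r) ^ 2)) := by
        gcongr; exact add_sq_le
      _ = B * (1 + D) ^ 2 + B * (Real.sqrt (γ / B) ^ 2) * r ^ 2 := by rw [hB]; ring
      _ = _ := by rw [hs]; field_simp
  have h5 := h1 r hr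
  have h4 := h2 r hr
  have hr4 : 0 ≤ r ^ 4 := by positivity
  have := mul_le_mul_of_nonneg_left hG2 hr4
  have h6 : 0 ≤ γ * r ^ 6 := by positivity
  have e : 3 * r ^ 4 * (-γ * r ^ 2 + 2 * (|CG| * r) + M * G ^ 2) + 12 * r ^ 4 * G ^ 2
    = -3 * (γ * r ^ 6) + 6 * |CG| * r ^ 5 + r ^ 4 * (A * G ^ 2) := by rw [hA]; ring
  have e2 : r ^ 4 * (B * (1 + D) ^ 2 + γ * r ^ 2) = B * (1 + D) ^ 2 * r ^ 4 + γ * r ^ 6 := by ring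
  rw [e]; rw [e2] at this
  linarith

lemma W2_self {k : ℕ} (μ : Measure (Vec k)) : W2 μ μ = 0 := by
  unfold W2
  apply IsLeast.csInf_eq
  constructor
  · refine ⟨μ.map (fun x => (x, x)), ⟨?_, ?_⟩, ?_⟩
    · rw [Measure.map_map (by fun_prop) (by fun_prop)]
      exact Measure.map_id
    · rw [Measure.map_map (by fun_prop) (by fun_prop)]
      exact Measure.map_id
    · rw [integral_map (by fun_prop) (Continuous.aestronglyMeasurable (by fun_prop))]
      simp
  · rintro c ⟨π, -, rfl⟩
    exact Real.sqrt_nonneg _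

lemma hasGradient_radial {m : ℕ} {F k : ℝ → ℝ} (hF : ∀ s, HasDerivAt F (k s) s) (c : ℝ) (y : Vec m) :
    HasGradientAt (fun z : Vec m => F (‖z‖ ^ 2) + c) ((2 * k (‖y‖ ^ 2)) • y) y := by
  rw [hasGradientAt_iff_hasFDerivAt]
  have h1 : HasFDerivAt (fun z : Vec m => ‖z‖ ^ 2) (2 • innerSL ℝ y) y :=
    (hasStrictFDerivAt_norm_sq y).hasFDerivAt
  have := ((hF (‖y‖ ^ 2)).comp_hasFDerivAt y h1).add_const c
  refine this.congr_fderiv ?_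
  ext v
  simp
  ring

lemma hess_radial {m : ℕ} {F k k' : ℝ → ℝ} (hF : ∀ s, HasDerivAt F (k s) s)
    (hk : ∀ s, HasDerivAt k (k' s) s) (c : ℝ) (y : Vec m) :
    hess (fun z : Vec m => F (‖z‖ ^ 2) + c) y =
      (2 * k (‖y‖ ^ 2)) • ContinuousLinearMap.id ℝ (Vec m) +
        (4 * k' (‖y‖ ^ 2)) • outer y y := by
  unfold hess
  rw [gradient_eq (fun x => hasGradient_radial hF c x)]
  have h1 : HasFDerivAt (fun z : Vec m => ‖z‖ ^ 2) (2 • innerSL ℝ y) y :=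
    (hasStrictFDerivAt_norm_sq y).hasFDerivAt
  have h2 := ((hk (‖y‖ ^ 2)).comp_hasFDerivAt y h1).const_mul 2
  have h3 := h2.smul (hasFDerivAt_id y)
  refine (HasFDerivAt.fderiv (f' := _) h3).trans ?_
  ext v i
  simp [outer]
  ring

lemma trCLM_comp_outer {m : ℕ} (A : Mat m m) (y : Vec m) :
    trCLM (A.comp (outer y y)) = ⟪y, A y⟫ := by
  have : (A.comp (outer y y)).toLinearMap = ((innerSL ℝ y).toLinearMap).smulRight (A y) := by
    ext v; simp [outer]
  unfold trCLM
  rw [this, LinearMap.trace_smulRight]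
  simp

lemma trCLM_gg {m d : ℕ} (G : Mat m d) :
    trCLM (G.comp (adj G)) = ∑ i, ‖adj G (EuclideanSpace.basisFun (Fin m) ℝ i)‖ ^ 2 := by
  unfold trCLM
  rw [LinearMap.trace_eq_sum_inner _ (EuclideanSpace.basisFun (Fin m) ℝ)]
  refine Finset.sum_congr rfl fun i _ => ?_
  rw [← real_inner_self_eq_norm_sq]
  simp only [ContinuousLinearMap.coe_coe, ContinuousLinearMap.comp_apply]
  conv_rhs => rw [adj, ContinuousLinearMap.adjoint_inner_left]
  rfl

lemma trCLM_gg_le {m d : ℕ} (G : Mat m d) : trCLM (G.comp (adj G)) ≤ m * ‖G‖ ^ 2 := by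
  rw [trCLM_gg]
  calc _ ≤ ∑ i : Fin m, ‖G‖ ^ 2 := by
        refine Finset.sum_le_sum fun i _ => ?_
        have := (adj G).le_opNorm (EuclideanSpace.basisFun (Fin m) ℝ i)
        rw [OrthonormalBasis.norm_eq_one, mul_one] at this
        have h2 : ‖adj G‖ = ‖G‖ := by simp [adj]
        rw [h2] at this
        gcongr
    _ = _ := by simp

lemma gen_radial {n m d : ℕ} (f : Vec n → Measure (Vec n) → Vec m → Vec m)
    (g : Vec n → Measure (Vec n) → Vec m → Mat m d) (x : Vec n) (μ : Measure (Vec n))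
    {F k k' : ℝ → ℝ} (hF : ∀ s, HasDerivAt F (k s) s)
    (hk : ∀ s, HasDerivAt k (k' s) s) (y : Vec m) :
    genFrozen f g x μ (fun z : Vec m => F (‖z‖ ^ 2)) y =
      2 * k (‖y‖ ^ 2) * ⟪f x μ y, y⟫ + k (‖y‖ ^ 2) * trCLM ((g x μ y).comp (adj (g x μ y))) +
        2 * k' (‖y‖ ^ 2) * ‖adj (g x μ y) y‖ ^ 2 := by
  have e : (fun z : Vec m => F (‖z‖ ^ 2)) = fun z => F (‖z‖ ^ 2) + 0 := by simp
  unfold genFrozen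
  rw [e, (hasGradient_radial hF 0 y).gradient, hess_radial hF hk]
  set G := g x μ y
  have h1 : trCLM ((G.comp (adj G)).comp ((2 * k (‖y‖ ^ 2)) • ContinuousLinearMap.id ℝ (Vec m) +
        (4 * k' (‖y‖ ^ 2)) • outer y y)) = (2 * k (‖y‖ ^ 2)) * trCLM (G.comp (adj G)) +
        (4 * k' (‖y‖ ^ 2)) * trCLM ((G.comp (adj G)).comp (outer y y)) := by
    rw [ContinuousLinearMap.comp_add, ContinuousLinearMap.comp_smul, ContinuousLinearMap.comp_smul,
      ContinuousLinearMap.comp_id]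
    simp [trCLM]
  have h2 : ⟪y, (G.comp (adj G)) y⟫ = ‖adj G y‖ ^ 2 := by
    rw [← real_inner_self_eq_norm_sq]
    conv_rhs => rw [adj, ContinuousLinearMap.adjoint_inner_left]
    rfl
  rw [h1, trCLM_comp_outer, h2, inner_smul_right]
  ring

/-- The truncated sixth power. -/
def truncV {m : ℕ} (R : ℕ) (y : Vec m) : ℝ :=
  Set.indicator {z : Vec m | ‖z‖ ^ 2 ≤ (R : ℝ)} (fun z => ‖z‖ ^ 6) y

lemma truncV_nonneg {m : ℕ} (R : ℕ) (y : Vec m) : 0 ≤ truncV R y :=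
  Set.indicator_nonneg (fun z _ => by positivity) y

lemma truncV_le {m : ℕ} (R : ℕ) (y : Vec m) : truncV R y ≤ (R : ℝ) ^ 3 := by
  unfold truncV
  refine Set.indicator_le' (g := fun _ => (R : ℝ) ^ 3) ?_ ?_ y
  · intro z hz
    have : ‖z‖ ^ 6 = (‖z‖ ^ 2) ^ 3 := by ring
    rw [this]
    exact pow_le_pow_left₀ (by positivity) hz 3
  · intro z _; positivity

lemma truncV_meas {m : ℕ} (R : ℕ) : Measurable (truncV R : Vec m → ℝ) := by
  unfold truncV
  exact (Measurable.indicator (by fun_prop) (measurableSet_le (by fun_prop) (by fun_prop)))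

lemma truncV_mono {m : ℕ} : Monotone (fun R (y : Vec m) => truncV R y) := by
  intro a b hab y
  unfold truncV
  refine Set.indicator_le_indicator_of_subset ?_ (fun z => by positivity) y
  intro z hz
  have h1 : ‖z‖ ^ 2 ≤ (a : ℝ) := hz
  have h2 : (a : ℝ) ≤ b := by exact_mod_cast hab
  exact h1.trans h2

lemma truncV_iSup {m : ℕ} (y : Vec m) :
    ⨆ R : ℕ, ENNReal.ofReal (truncV R y) = ENNReal.ofReal (‖y‖ ^ 6) := by
  apply le_antisymm
  · refine iSup_le fun R => ENNReal.ofReal_le_ofReal ?_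
    exact Set.indicator_le_self' (fun z _ => by positivity) y
  · obtain ⟨R, hR⟩ := exists_nat_ge (‖y‖ ^ 2)
    refine le_iSup_of_le R ?_
    unfold truncV
    rw [Set.indicator_of_mem (by exact hR)]

lemma cont_fg {n m d : ℕ} {Ω : Type} [mΩ : MeasurableSpace Ω]
    {P : Measure Ω} {ℱ : Filtration ℝ mΩ} (FS : FrozenSetting n m d Ω P ℱ)
    (x : Vec n) (μ : Measure (Vec n)) (hμ : memP2 μ) :
    Continuous (FS.f x μ) ∧ Continuous (FS.g x μ) := by
  have key : ∀ y1 y2, ‖FS.f x μ y1 - FS.f x μ y2‖ + ‖FS.g x μ y1 - FS.g x μ y2‖ ≤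
      |FS.CL| * ‖y1 - y2‖ := by
    intro y1 y2
    have := FS.lip x x μ μ y1 y2 hμ hμ
    simp only [sub_self, norm_zero, zero_add, W2_self, add_zero] at this
    exact this.trans (by gcongr; exact le_abs_self _)
  constructor
  · refine (LipschitzWith.of_dist_le_mul (K := Real.nnabs FS.CL) fun a b => ?_).continuous
    rw [dist_eq_norm, dist_eq_norm]
    have := key a b
    have := norm_nonneg (FS.g x μ a - FS.g x μ b)
    simp only [Real.coe_nnabs]; linarith
  · refine (LipschitzWith.of_dist_le_mul (K := Real.nnabs FS.CL) fun a b => ?_).continuous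
    rw [dist_eq_norm, dist_eq_norm]
    have := key a b
    have := norm_nonneg (FS.f x μ a - FS.f x μ b)
    simp only [Real.coe_nnabs]; linarith

lemma key_test {n m d : ℕ} {Ω : Type} [mΩ : MeasurableSpace Ω]
    {P : Measure Ω} {ℱ : Filtration ℝ mΩ} (FS : FrozenSetting n m d Ω P ℱ) :
    ∃ C, 0 ≤ C ∧ ∀ (x : Vec n) (μ : Measure (Vec n)), memP2 μ → ∀ R : ℕ,
      ∃ φ : Vec m → ℝ, ∃ c : ℝ, TestFun φ ∧
        Continuous (genFrozen FS.f FS.g x μ φ) ∧ HasCompactSupport (genFrozen FS.f FS.g x μ φ) ∧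
        (∀ y, truncV R y ≤ φ y + c) ∧ (∀ y, φ y + c ≤ ‖y‖ ^ 6) ∧
        (∀ y, genFrozen FS.f FS.g x μ φ y ≤ C - FS.γ / 2 * truncV R y) := by
  obtain ⟨C, hC, hb⟩ := scalar_bound_s16 FS.γ FS.ς FS.CG m FS.hγ FS.hς (by positivity)
  refine ⟨C, hC, fun x μ hμ R => ?_⟩
  obtain ⟨F, k, k', χ, c, hF, hk, hk'c, hzero, h01, h1, hkχ, hk'χ, hFle, hFeq, hF0⟩ := cutoff1D R
  have hgen := gen_radial FS.f FS.g x μ hF hk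
  obtain ⟨hfc, hgc⟩ := cont_fg FS x μ hμ
  have hkc : Continuous k := continuous_iff_continuousAt.2 fun s => (hk s).continuousAt
  have hball : ∀ y : Vec m, y ∉ Metric.closedBall (0 : Vec m) ((R:ℝ) + 1) → (R:ℝ) + 1 < ‖y‖ ^ 2 := by
    intro y hy
    rw [mem_closedBall_zero_iff, not_le] at hy
    have : (0:ℝ) ≤ R := by positivity
    nlinarith
  refine ⟨fun z => F (‖z‖ ^ 2), c, ⟨?_, ?_⟩, ?_, ?_, ?_, ?_, ?_⟩
  · have hk1 : ContDiff ℝ 1 k := by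
      rw [contDiff_one_iff_deriv]
      refine ⟨fun s => (hk s).differentiableAt, ?_⟩
      rw [show deriv k = k' from funext fun s => (hk s).deriv]; exact hk'c
    have hF2 : ContDiff ℝ 2 F := by
      rw [show (2 : WithTop ℕ∞) = 1 + 1 by norm_num, contDiff_succ_iff_deriv]
      refine ⟨fun s => (hF s).differentiableAt, by simp, ?_⟩
      rw [show deriv F = k from funext fun s => (hF s).deriv]; exact hk1
    exact hF2.comp (contDiff_norm_sq ℝ)
  · refine HasCompactSupport.intro (isCompact_closedBall (0 : Vec m) ((R:ℝ) + 1)) fun y hy => ?_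
    exact (hzero _ (hball y hy)).1
  · rw [show genFrozen FS.f FS.g x μ (fun z => F (‖z‖ ^ 2)) = _ from funext hgen]
    have ha : Continuous fun y => adj (FS.g x μ y) :=
      (ContinuousLinearMap.adjoint (𝕜 := ℝ) (E := Vec d) (F := Vec m)).continuous.comp hgc
    simp only [trCLM_gg]
    fun_prop
  · refine HasCompactSupport.intro (isCompact_closedBall (0 : Vec m) ((R:ℝ) + 1)) fun y hy => ?_
    obtain ⟨-, h2, h3⟩ := hzero _ (hball y hy)
    rw [hgen, h2, h3]; ring
  · intro y
    by_cases h : ‖y‖ ^ 2 ≤ R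
    · unfold truncV
      rw [Set.indicator_of_mem (by exact h)]
      show _ ≤ F (‖y‖ ^ 2) + c
      rw [hFeq _ (by positivity) h]
      apply le_of_eq; ring
    · unfold truncV
      rw [Set.indicator_of_notMem (by exact h)]
      exact hF0 _ (by positivity)
  · intro y
    refine (hFle _ (by positivity)).trans (le_of_eq (by ring))
  · intro y
    rw [hgen, hkχ]
    set r := ‖y‖
    set G := ‖FS.g x μ y‖ with hG
    have hr : 0 ≤ r := norm_nonneg _
    have hin : 2 * ⟪FS.f x μ y, y⟫ ≤ -FS.γ * r ^ 2 + 2 * (|FS.CG| * r) := by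
      have h1 := FS.dissip x μ y 0 hμ
      have h2 := FS.growthf x μ 0 hμ
      simp only [sub_zero, norm_zero, add_zero, mul_one] at h1 h2
      rw [inner_sub_left] at h1
      have h3 : ⟪FS.f x μ 0, y⟫ ≤ |FS.CG| * r :=
        (real_inner_le_norm _ _).trans (by gcongr; exact h2.trans (le_abs_self _))
      have h4 : 0 ≤ ‖FS.g x μ y - FS.g x μ 0‖ ^ 2 := by positivity
      linarith
    have htr := trCLM_gg_le (FS.g x μ y)
    have hadj : ‖adj (FS.g x μ y) y‖ ^ 2 ≤ G ^ 2 * r ^ 2 := by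
      have := (adj (FS.g x μ y)).le_opNorm y
      have h2 : ‖adj (FS.g x μ y)‖ = G := by simp [adj, hG]
      rw [h2] at this
      calc _ ≤ (G * r) ^ 2 := by gcongr
        _ = _ := by ring
    have hB := hb r G hr (norm_nonneg _) (FS.growthg x μ y hμ)
    obtain ⟨hχ0, hχ1⟩ := h01 (r ^ 2)
    have hk'2 : 2 * k' (r ^ 2) * ‖adj (FS.g x μ y) y‖ ^ 2 ≤
        χ (r ^ 2) * (12 * r ^ 4 * G ^ 2) := by
      calc 2 * k' (r ^ 2) * ‖adj (FS.g x μ y) y‖ ^ 2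
          ≤ 2 * (6 * r ^ 2 * χ (r ^ 2)) * ‖adj (FS.g x μ y) y‖ ^ 2 := by
            gcongr; exact hk'χ _
        _ ≤ 2 * (6 * r ^ 2 * χ (r ^ 2)) * (G ^ 2 * r ^ 2) := by gcongr
        _ = _ := by ring
    have hmain : 2 * (3 * (r ^ 2) ^ 2 * χ (r ^ 2)) * ⟪FS.f x μ y, y⟫ +
        3 * (r ^ 2) ^ 2 * χ (r ^ 2) * trCLM ((FS.g x μ y).comp (adj (FS.g x μ y))) ≤
        χ (r ^ 2) * (3 * r ^ 4 * (-FS.γ * r ^ 2 + 2 * (|FS.CG| * r) + m * G ^ 2)) := by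
      have : 0 ≤ χ (r ^ 2) * (3 * r ^ 4) := by positivity
      have := mul_le_mul_of_nonneg_left (add_le_add hin htr) this
      linarith
    have hfin : χ (r ^ 2) * (C - FS.γ / 2 * r ^ 6) ≤ C - FS.γ / 2 * truncV R y := by
      have hγ := FS.hγ
      by_cases h : ‖y‖ ^ 2 ≤ R
      · unfold truncV
        rw [Set.indicator_of_mem (by exact h), h1 _ h, one_mul]
      · unfold truncV
        rw [Set.indicator_of_notMem (by exact h)]
        have : 0 ≤ χ (r ^ 2) * (FS.γ / 2 * r ^ 6) := by positivity
        nlinarith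
    have := mul_le_mul_of_nonneg_left hB hχ0
    linarith

/-- invariant measure part -/
lemma inv_bound {n m d : ℕ} {Ω : Type} [mΩ : MeasurableSpace Ω]
    {P : Measure Ω} {ℱ : Filtration ℝ mΩ} (FS : FrozenSetting n m d Ω P ℱ)
    (x : Vec n) (μ : Measure (Vec n)) (hμ : memP2 μ) (C : ℝ)
    (H : ∀ R : ℕ, ∃ φ : Vec m → ℝ, ∃ c : ℝ, TestFun φ ∧
        Continuous (genFrozen FS.f FS.g x μ φ) ∧ HasCompactSupport (genFrozen FS.f FS.g x μ φ) ∧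
        (∀ y, truncV R y ≤ φ y + c) ∧ (∀ y, φ y + c ≤ ‖y‖ ^ 6) ∧
        (∀ y, genFrozen FS.f FS.g x μ φ y ≤ C - FS.γ / 2 * truncV R y)) :
    ∫⁻ z, ENNReal.ofReal (‖z‖ ^ 6) ∂(FS.ν x μ) ≤ ENNReal.ofReal (C / (FS.γ / 2)) := by
  obtain ⟨hprob, hinv⟩ := FS.invν x μ hμ
  have hγ := FS.hγ
  simp_rw [← truncV_iSup]
  rw [lintegral_iSup (fun R => (truncV_meas R).ennreal_ofReal)
    (fun a b hab y => ENNReal.ofReal_le_ofReal (truncV_mono hab y))]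
  refine iSup_le fun R => ?_
  have hint : Integrable (truncV R) (FS.ν x μ) :=
    Integrable.of_bound (truncV_meas R).aestronglyMeasurable ((R:ℝ)^3)
      (ae_of_all _ fun y => by
        rw [Real.norm_of_nonneg (truncV_nonneg R y)]; exact truncV_le R y)
  rw [← ofReal_integral_eq_lintegral_ofReal hint (ae_of_all _ (truncV_nonneg R))]
  apply ENNReal.ofReal_le_ofReal
  obtain ⟨φ, c, hφ, hc, hcs, -, -, hle⟩ := H R
  have h0 := hinv φ hφ
  have h1 : ∫ y, genFrozen FS.f FS.g x μ φ y ∂(FS.ν x μ) ≤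
      ∫ y, (C - FS.γ / 2 * truncV R y) ∂(FS.ν x μ) :=
    integral_mono (hc.integrable_of_hasCompactSupport hcs)
      ((integrable_const _).sub (hint.const_mul _)) hle
  rw [h0, integral_sub (integrable_const _) (hint.const_mul _), integral_const_mul] at h1
  simp at h1
  rw [le_div_iff₀ (by positivity)]
  linarith

lemma step_trunc {n m d : ℕ} {Ω : Type} [mΩ : MeasurableSpace Ω]
    {P : Measure Ω} {ℱ : Filtration ℝ mΩ} (FS : FrozenSetting n m d Ω P ℱ)
    (x : Vec n) (μ : Measure (Vec n)) (hμ : memP2 μ) (C : ℝ) (hC : 0 ≤ C) (R : ℕ)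
    (H : ∃ φ : Vec m → ℝ, ∃ c : ℝ, TestFun φ ∧
        Continuous (genFrozen FS.f FS.g x μ φ) ∧ HasCompactSupport (genFrozen FS.f FS.g x μ φ) ∧
        (∀ y, truncV R y ≤ φ y + c) ∧ (∀ y, φ y + c ≤ ‖y‖ ^ 6) ∧
        (∀ y, genFrozen FS.f FS.g x μ φ y ≤ C - FS.γ / 2 * truncV R y))
    (y : Vec m) (s t : ℝ) (hs : 0 ≤ s) (hst : s ≤ t) :
    ∫⁻ ω, ENNReal.ofReal (truncV R (FS.Y x μ y t ω)) ∂P + ENNReal.ofReal (FS.γ / 2) *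
      ∫⁻ r in Set.Ioc s t, ∫⁻ ω, ENNReal.ofReal (truncV R (FS.Y x μ y r ω)) ∂P ≤
    ∫⁻ ω, ENNReal.ofReal (‖FS.Y x μ y s ω‖ ^ 6) ∂P + ENNReal.ofReal (C * (t - s)) := by
  have hprob := FS.probP
  have hγ := FS.hγ
  obtain ⟨φ, c, hφ, hLc, hLs, hlow, hup, hle⟩ := H
  set L := genFrozen FS.f FS.g x μ φ
  have hM := FS.mart x μ y hμ φ hφ
  set Y := FS.Y x μ y with hY
  have hYm : ∀ t, Measurable (Y t) := FS.measY x μ y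
  have hYc : ∀ ω, Continuous fun t => Y t ω := FS.contY x μ y
  have hjoint : Measurable (Function.uncurry Y) :=
    measurable_uncurry_of_continuous_of_measurable hYc hYm
  set M : ℝ → Ω → ℝ := fun t ω => φ (Y t ω) - ∫ r in Set.Ioc (0 : ℝ) t, L (Y r ω) with hMdef
  have ht : 0 ≤ t := hs.trans hst
  have hMs : Integrable (M s) P := (hM.1 s hs).2
  have hMt : Integrable (M t) P := (hM.1 t ht).2
  have hD : ∫ ω, M t ω ∂P = ∫ ω, M s ω ∂P := by
    rw [← integral_condExp (ℱ.le s) (f := M t)]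
    exact integral_congr_ae (hM.2 s t hs hst)
  -- integrability facts
  have hφc : Continuous φ := hφ.1.continuous
  obtain ⟨B, hB⟩ := hφ.2.exists_bound_of_continuous hφc
  have hφi : ∀ r, Integrable (fun ω => φ (Y r ω)) P := fun r =>
    Integrable.of_bound (hφc.measurable.comp (hYm r)).aestronglyMeasurable B
      (ae_of_all _ fun ω => hB _)
  have hφci : Integrable (fun ω => φ (Y s ω) + c) P := (hφi s).add (integrable_const c)
  have htm : Measurable (fun p : Ω × ℝ => truncV R (Y p.2 p.1)) :=
    (truncV_meas R).comp (hjoint.comp measurable_swap)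
  have hti : ∀ r, Integrable (fun ω => truncV R (Y r ω)) P := fun r =>
    Integrable.of_bound ((truncV_meas R).comp (hYm r)).aestronglyMeasurable ((R:ℝ)^3)
      (ae_of_all _ fun ω => by
        rw [Real.norm_of_nonneg (truncV_nonneg R _)]; exact truncV_le R _)
  have htp : Integrable (fun p : Ω × ℝ => truncV R (Y p.2 p.1))
      (P.prod (volume.restrict (Set.Ioc s t))) :=
    Integrable.of_bound htm.aestronglyMeasurable ((R:ℝ)^3)
      (ae_of_all _ fun p => by
        rw [Real.norm_of_nonneg (truncV_nonneg R _)]; exact truncV_le R _)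
  have htpath : ∀ ω, Integrable (fun r => truncV R (Y r ω)) (volume.restrict (Set.Ioc s t)) :=
    fun ω => Integrable.of_bound
      ((truncV_meas R).comp (hYc ω).measurable).aestronglyMeasurable ((R:ℝ)^3)
      (ae_of_all _ fun p => by
        rw [Real.norm_of_nonneg (truncV_nonneg R _)]; exact truncV_le R _)
  have hLpath : ∀ ω a b, IntegrableOn (fun r => L (Y r ω)) (Set.Ioc a b) volume := fun ω a b =>
    ((hLc.comp (hYc ω)).integrableOn_Icc).mono_set Set.Ioc_subset_Icc_self
  -- pathwise inequality
  have hpath : ∀ ω, truncV R (Y t ω) + FS.γ / 2 * ∫ r in Set.Ioc s t, truncV R (Y r ω) ≤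
      ((φ (Y s ω) + c) + C * (t - s)) + (M t ω - M s ω) := by
    intro ω
    have e1 : ∫ r in Set.Ioc (0 : ℝ) t, L (Y r ω) =
        (∫ r in Set.Ioc (0 : ℝ) s, L (Y r ω)) + ∫ r in Set.Ioc s t, L (Y r ω) := by
      rw [← setIntegral_union (Set.Ioc_disjoint_Ioc_of_le le_rfl) measurableSet_Ioc
        (hLpath ω 0 s) (hLpath ω s t), Set.Ioc_union_Ioc_eq_Ioc hs hst]
    have e2 : ∫ r in Set.Ioc s t, L (Y r ω) ≤
        ∫ r in Set.Ioc s t, (C - FS.γ / 2 * truncV R (Y r ω)) :=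
      integral_mono (hLpath ω s t) ((integrable_const _).sub ((htpath ω).const_mul _))
        fun r => hle _
    rw [integral_sub (integrable_const _) ((htpath ω).const_mul _), integral_const_mul] at e2
    have e3 : ∫ r in Set.Ioc s t, C = C * (t - s) := by
      simp [Measure.real, hst, mul_comm]
    rw [e3] at e2
    have e4 := hlow (Y t ω)
    simp only [hMdef]
    rw [e1]
    linarith
  have hreal : ∫ ω, truncV R (Y t ω) ∂P + FS.γ / 2 * ∫ ω, (∫ r in Set.Ioc s t, truncV R (Y r ω)) ∂P ≤
      ∫ ω, (φ (Y s ω) + c) ∂P + C * (t - s) := by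
    have i0 : Integrable (fun ω => FS.γ / 2 * ∫ r in Set.Ioc s t, truncV R (Y r ω)) P :=
      htp.integral_prod_left.const_mul (FS.γ / 2)
    have i1 : Integrable (fun ω => truncV R (Y t ω) +
        FS.γ / 2 * ∫ r in Set.Ioc s t, truncV R (Y r ω)) P := (hti t).add i0
    have i2 : Integrable (fun ω => (φ (Y s ω) + c) + C * (t - s)) P :=
      hφci.add (integrable_const _)
    have i3 : Integrable (fun ω => M t ω - M s ω) P := hMt.sub hMs
    have := integral_mono i1 (i2.add i3) hpath
    rw [integral_add (hti t) i0] at this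
    have e5 : ∫ ω, (((fun ω => (φ (Y s ω) + c) + C * (t - s)) + fun ω => M t ω - M s ω) ω) ∂P =
        ∫ ω, (φ (Y s ω) + c) ∂P + C * (t - s) := by
      rw [integral_add' i2 i3, integral_add hφci (integrable_const _), integral_sub hMt hMs, hD]
      simp
    rw [e5, integral_const_mul] at this
    exact this
  -- conversion
  have c1 : ∫⁻ ω, ENNReal.ofReal (truncV R (Y t ω)) ∂P =
      ENNReal.ofReal (∫ ω, truncV R (Y t ω) ∂P) :=
    (ofReal_integral_eq_lintegral_ofReal (hti t) (ae_of_all _ fun ω => truncV_nonneg R _)).symm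
  have c2 : ∫⁻ r in Set.Ioc s t, ∫⁻ ω, ENNReal.ofReal (truncV R (Y r ω)) ∂P =
      ENNReal.ofReal (∫ ω, (∫ r in Set.Ioc s t, truncV R (Y r ω)) ∂P) := by
    rw [ofReal_integral_eq_lintegral_ofReal htp.integral_prod_left
      (ae_of_all _ fun ω => integral_nonneg fun r => truncV_nonneg R _)]
    rw [lintegral_lintegral_swap (((truncV_meas R).comp hjoint).ennreal_ofReal.aemeasurable)]
    refine lintegral_congr fun ω => ?_
    exact (ofReal_integral_eq_lintegral_ofReal (htpath ω)
      (ae_of_all _ fun ω => truncV_nonneg R _)).symm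
  have c3 : ENNReal.ofReal (∫ ω, (φ (Y s ω) + c) ∂P) ≤ ∫⁻ ω, ENNReal.ofReal (‖Y s ω‖ ^ 6) ∂P := by
    rw [ofReal_integral_eq_lintegral_ofReal hφci
      (ae_of_all _ fun ω => (truncV_nonneg R _).trans (hlow _))]
    exact lintegral_mono fun ω => ENNReal.ofReal_le_ofReal (hup _)
  have n1 : 0 ≤ ∫ ω, truncV R (Y t ω) ∂P := integral_nonneg fun ω => truncV_nonneg R _
  have n2 : 0 ≤ ∫ ω, (∫ r in Set.Ioc s t, truncV R (Y r ω)) ∂P :=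
    integral_nonneg fun ω => integral_nonneg fun r => truncV_nonneg R _
  have n3 : 0 ≤ ∫ ω, (φ (Y s ω) + c) ∂P :=
    integral_nonneg fun ω => (truncV_nonneg R _).trans (hlow _)
  rw [c1, c2, ← ENNReal.ofReal_mul (by positivity), ← ENNReal.ofReal_add n1 (by positivity)]
  refine (ENNReal.ofReal_le_ofReal hreal).trans ?_
  rw [ENNReal.ofReal_add n3 (mul_nonneg hC (by linarith))]
  gcongr

lemma step_full {n m d : ℕ} {Ω : Type} [mΩ : MeasurableSpace Ω]
    {P : Measure Ω} {ℱ : Filtration ℝ mΩ} (FS : FrozenSetting n m d Ω P ℱ)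
    (x : Vec n) (μ : Measure (Vec n)) (y : Vec m) (s t K : ℝ)
    (H : ∀ R : ℕ, ∫⁻ ω, ENNReal.ofReal (truncV R (FS.Y x μ y t ω)) ∂P + ENNReal.ofReal (FS.γ / 2) *
      ∫⁻ r in Set.Ioc s t, ∫⁻ ω, ENNReal.ofReal (truncV R (FS.Y x μ y r ω)) ∂P ≤
    ∫⁻ ω, ENNReal.ofReal (‖FS.Y x μ y s ω‖ ^ 6) ∂P + ENNReal.ofReal K) :
    ∫⁻ ω, ENNReal.ofReal (‖FS.Y x μ y t ω‖ ^ 6) ∂P + ENNReal.ofReal (FS.γ / 2) *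
      ∫⁻ r in Set.Ioc s t, ∫⁻ ω, ENNReal.ofReal (‖FS.Y x μ y r ω‖ ^ 6) ∂P ≤
    ∫⁻ ω, ENNReal.ofReal (‖FS.Y x μ y s ω‖ ^ 6) ∂P + ENNReal.ofReal K := by
  have hprob := FS.probP
  have hjoint : Measurable (Function.uncurry (FS.Y x μ y)) :=
    measurable_uncurry_of_continuous_of_measurable (FS.contY x μ y) (FS.measY x μ y)
  have e1 : ∀ r, ∫⁻ ω, ENNReal.ofReal (‖FS.Y x μ y r ω‖ ^ 6) ∂P =
      ⨆ R : ℕ, ∫⁻ ω, ENNReal.ofReal (truncV R (FS.Y x μ y r ω)) ∂P := by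
    intro r
    simp_rw [← truncV_iSup]
    exact lintegral_iSup (fun R => ((truncV_meas R).comp (FS.measY x μ y r)).ennreal_ofReal)
      (fun a b hab ω => ENNReal.ofReal_le_ofReal (truncV_mono hab _))
  have m1 : ∀ r, Monotone fun R : ℕ => ∫⁻ ω, ENNReal.ofReal (truncV R (FS.Y x μ y r ω)) ∂P :=
    fun r a b hab => lintegral_mono fun ω => ENNReal.ofReal_le_ofReal (truncV_mono hab _)
  have e2 : ∫⁻ r in Set.Ioc s t, ∫⁻ ω, ENNReal.ofReal (‖FS.Y x μ y r ω‖ ^ 6) ∂P =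
      ⨆ R : ℕ, ∫⁻ r in Set.Ioc s t, ∫⁻ ω, ENNReal.ofReal (truncV R (FS.Y x μ y r ω)) ∂P := by
    simp_rw [e1]
    rw [lintegral_iSup]
    · intro R
      exact Measurable.lintegral_prod_right (((truncV_meas R).comp hjoint).ennreal_ofReal)
    · exact fun a b hab r => m1 r hab
  rw [e2, ENNReal.mul_iSup]
  conv_lhs => rw [e1 t]
  rw [ENNReal.iSup_add_iSup_of_monotone (m1 t)]
  · exact iSup_le H
  · intro a b hab
    exact mul_le_mul_right (lintegral_mono fun r => m1 r hab) _

lemma discrete_gronwall (U : ℝ → ℝ) (C b : ℝ) (hC : 0 ≤ C) (hb : 0 < b)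
    (h : ∀ s t, 0 ≤ s → s ≤ t → U t * (1 + b * (t - s)) ≤ U s + C * (t - s) + b * C * (t - s) ^ 2)
    (t : ℝ) (ht : 0 ≤ t) : U t ≤ Real.exp (-(b * t)) * U 0 + C / b := by
  have main : ∀ N : ℕ, U t ≤ ((1 + b * t / ((N:ℝ) + 1)) ^ (N + 1))⁻¹ * U 0 +
      (C / b + C * (t / ((N:ℝ) + 1))) := by
    intro N
    set η := t / ((N:ℝ) + 1) with hη
    have hη0 : 0 ≤ η := by positivity
    have hbη : b * t / ((N:ℝ) + 1) = b * η := by rw [hη]; ring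
    rw [hbη]
    have hpos : 0 < 1 + b * η := by positivity
    set K := C / b + C * η with hK
    have hK0 : 0 ≤ K := by positivity
    have ind : ∀ j : ℕ, U (j * η) ≤ ((1 + b * η) ^ j)⁻¹ * U 0 + K := by
      intro j
      induction j with
      | zero => simp; exact hK0
      | succ j ih =>
        have h1 := h (j * η) ((j + 1 : ℕ) * η) (by positivity) (by gcongr; simp)
        have e : ((j + 1 : ℕ) : ℝ) * η - j * η = η := by push_cast; ring
        rw [e] at h1
        have hbK : C * η + b * C * η ^ 2 = b * η * K := by rw [hK]; field_simp
        have h2 : U ((j + 1 : ℕ) * η) * (1 + b * η) ≤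
            ((1 + b * η) ^ j)⁻¹ * U 0 + K * (1 + b * η) := by linarith
        rw [← le_div_iff₀ hpos] at h2
        refine h2.trans (le_of_eq ?_)
        rw [pow_succ]; field_simp
    have := ind (N + 1)
    have e : ((N + 1 : ℕ) : ℝ) * η = t := by rw [hη]; push_cast; field_simp
    rwa [e] at this
  have l1 : Tendsto (fun N : ℕ => (1 + b * t / ((N:ℝ) + 1)) ^ (N + 1)) atTop
      (𝓝 (Real.exp (b * t))) := by
    have := (Real.tendsto_one_add_div_pow_exp (b * t)).comp (tendsto_add_atTop_nat 1)
    refine this.congr fun N => ?_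
    simp
  have l2 : Tendsto (fun N : ℕ => t / ((N:ℝ) + 1)) atTop (𝓝 0) :=
    (tendsto_const_div_atTop_nhds_zero_nat t).comp (tendsto_add_atTop_nat 1) |>.congr fun N => by
      simp
  have l3 := ((l1.inv₀ (Real.exp_pos _).ne').mul_const (U 0)).add ((l2.const_mul C).const_add (C / b))
  rw [← Real.exp_neg] at l3
  simp only [mul_zero, add_zero] at l3
  exact ge_of_tendsto' l3 main

/-- **Estimate (5.13).** Under the dissipativity and growth conditions A1–A2 on `f, g`,
there are `β ∈ (0,γ)` and `C > 0` with
`sup_{x,μ} E|Y_t^{x,μ,y}|⁶ ≤ e^{−βt}|y|⁶ + C` and `sup_{x,μ} ∫ |y|⁶ ν^{x,μ}(dy) < ∞`. -/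
theorem sixth_moment_frozen {n m d : ℕ} {Ω : Type} [mΩ : MeasurableSpace Ω]
    {P : Measure Ω} {ℱ : Filtration ℝ mΩ} (FS : FrozenSetting n m d Ω P ℱ) :
    ∃ β ∈ Set.Ioo (0 : ℝ) FS.γ, ∃ Cc > (0 : ℝ),
      (∀ (x : Vec n) (μ : Measure (Vec n)) (y : Vec m) (t : ℝ), memP2 μ → 0 ≤ t →
        ∫ ω, ‖FS.Y x μ y t ω‖ ^ (6 : ℕ) ∂P ≤ Real.exp (-(β * t)) * ‖y‖ ^ (6 : ℕ) + Cc) ∧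
      ∀ (x : Vec n) (μ : Measure (Vec n)), memP2 μ →
        ∫ z, ‖z‖ ^ (6 : ℕ) ∂(FS.ν x μ) ≤ Cc := by
  have hprob := FS.probP
  have hγ := FS.hγ
  obtain ⟨C, hC, H⟩ := key_test FS
  refine ⟨FS.γ / 2, ⟨by positivity, by linarith⟩, C / (FS.γ / 2) + 1, by positivity, ?_, ?_⟩
  · intro x μ y t hμ ht
    set u : ℝ → ℝ≥0∞ := fun r => ∫⁻ ω, ENNReal.ofReal (‖FS.Y x μ y r ω‖ ^ 6) ∂P with hu
    have hstep : ∀ s t, 0 ≤ s → s ≤ t →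
        u t + ENNReal.ofReal (FS.γ / 2) * ∫⁻ r in Set.Ioc s t, u r ≤
          u s + ENNReal.ofReal (C * (t - s)) := fun s t hs hst =>
      step_full FS x μ y s t _ fun R => step_trunc FS x μ hμ C hC R (H x μ hμ R) y s t hs hst
    have hmono : ∀ s t, 0 ≤ s → s ≤ t → u t ≤ u s + ENNReal.ofReal (C * (t - s)) :=
      fun s t hs hst => le_self_add.trans (hstep s t hs hst)
    have hu0 : u 0 = ENNReal.ofReal (‖y‖ ^ 6) := by
      simp [hu, FS.initY]
    have hfin : ∀ s, 0 ≤ s → u s ≠ ⊤ := by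
      intro s hs
      have := hmono 0 s le_rfl hs
      rw [hu0] at this
      exact ne_top_of_le_ne_top (by simp) this
    have hU : ∀ r, ∫ ω, ‖FS.Y x μ y r ω‖ ^ 6 ∂P = (u r).toReal := by
      intro r
      exact integral_eq_lintegral_of_nonneg_ae (ae_of_all _ fun ω => by positivity)
        (((FS.measY x μ y r).norm.pow_const 6).aestronglyMeasurable)
    have hG := discrete_gronwall (fun r => (u r).toReal) C (FS.γ / 2) hC (by positivity) ?_ t ht
    · rw [hU]
      simp only [hu0] at hG
      rw [ENNReal.toReal_ofReal (by positivity)] at hG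
      linarith
    · intro s t hs hst
      have ht := hs.trans hst
      have hh : 0 ≤ t - s := by linarith
      have h1 : ENNReal.ofReal (((u t).toReal - C * (t - s)) * (t - s)) ≤
          ∫⁻ r in Set.Ioc s t, u r := by
        have : ∫⁻ r in Set.Ioc s t, ENNReal.ofReal ((u t).toReal - C * (t - s)) ≤
            ∫⁻ r in Set.Ioc s t, u r := by
          refine setLIntegral_mono' measurableSet_Ioc fun r hr => ?_
          have hr0 : 0 ≤ r := hs.trans hr.1.le
          have h2 := hmono r t hr0 hr.2
          have h3 := ENNReal.toReal_mono (by simp [hfin r hr0]) h2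
          rw [ENNReal.toReal_add (hfin r hr0) (by simp),
            ENNReal.toReal_ofReal (mul_nonneg hC (by linarith [hr.2]))] at h3
          rw [← ENNReal.ofReal_toReal (hfin r hr0)]
          apply ENNReal.ofReal_le_ofReal
          have := mul_le_mul_of_nonneg_left (show t - r ≤ t - s by linarith [hr.1]) hC
          linarith
        rwa [setLIntegral_const, Real.volume_Ioc, ← ENNReal.ofReal_mul' hh] at this
      have h4 := (add_le_add le_rfl (mul_le_mul_right h1 (ENNReal.ofReal (FS.γ / 2)))).trans
        (hstep s t hs hst)
      rw [← ENNReal.ofReal_mul (by positivity)] at h4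
      have h5 := ENNReal.toReal_mono (by simp [hfin s hs]) h4
      rw [ENNReal.toReal_add (hfin s hs) (by simp), ENNReal.toReal_add (hfin t ht) (by simp),
        ENNReal.toReal_ofReal (mul_nonneg hC hh)] at h5
      have h6 : FS.γ / 2 * (((u t).toReal - C * (t - s)) * (t - s)) ≤
        (ENNReal.ofReal (FS.γ / 2 * (((u t).toReal - C * (t - s)) * (t - s)))).toReal := by
        rw [ENNReal.toReal_ofReal']; exact le_max_left _ _
      show (u t).toReal * _ ≤ (u s).toReal + _ + _
      nlinarith
  · intro x μ hμ
    have h := inv_bound FS x μ hμ C (H x μ hμ)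
    rw [integral_eq_lintegral_of_nonneg_ae (ae_of_all _ fun z => by positivity)
      (Continuous.aestronglyMeasurable (by fun_prop))]
    have := ENNReal.toReal_mono (by simp) h
    rw [ENNReal.toReal_ofReal (by positivity)] at this
    linarith

end DiffApprox
end
end
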